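/- arXiv:2302.07085 — 3 statements merged into one kernel-verified Lean document; each statement's English description precedes it below -/
import Mathlib

section
/- Let Ω ⊂ ℂⁿ, n ≥ 2, be a bounded pseudoconvex domain with C^∞ boundary, and let p ∈ ∂Ω be a strongly pseudoconvex boundary point. Let F : Ω → Ω be a holomorphic map with F(z) = z + o(‖z−p‖) as z → p within Ω. Then for every neighborhood V of p in ℂⁿ, there exists a point z ∈ V ∩ Ω such that F^m(z) ∈ V for every m ≥ 1. -/
open Complex Topology Filter Metric Set Function

noncomputable section

/-- `ℂⁿ` as a normed space. -/
abbrev En (n : ℕ) : Type := EuclideanSpace ℂ (Fin n)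

/-- A domain: a nonempty open connected set. -/
def IsDomain' {n : ℕ} (Ω : Set (En n)) : Prop :=
  IsOpen Ω ∧ IsConnected Ω

/-- The Levi form of `ρ` at `q` in direction `ξ`:
`(1/4)(H_q(ξ,ξ) + H_q(iξ,iξ))` with `H_q` the second real Fréchet derivative. -/
def LeviForm {n : ℕ} (ρ : En n → ℝ) (q ξ : En n) : ℝ :=
  (1 / 4) * (iteratedFDeriv ℝ 2 ρ q ![ξ, ξ] + iteratedFDeriv ℝ 2 ρ q ![I • ξ, I • ξ])

/-- `ξ` lies in the complex tangent space of `{ρ = 0}` at `q`. -/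
def InCplxTangent {n : ℕ} (ρ : En n → ℝ) (q ξ : En n) : Prop :=
  fderiv ℝ ρ q ξ = 0 ∧ fderiv ℝ ρ q (I • ξ) = 0

/-- `ρ` is a `C^m` defining function for `Ω`. -/
def IsDefiningFunction {n : ℕ} (Ω : Set (En n)) (m : ℕ∞) (ρ : En n → ℝ) : Prop :=
  ContDiff ℝ m ρ ∧ Ω = {z | ρ z < 0} ∧ frontier Ω = {z | ρ z = 0} ∧
    ∀ q ∈ frontier Ω, fderiv ℝ ρ q ≠ 0

/-- `q` is a strongly pseudoconvex point with respect to `ρ`. -/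
def StronglyPcxAt {n : ℕ} (ρ : En n → ℝ) (q : En n) : Prop :=
  ∀ ξ : En n, ξ ≠ 0 → InCplxTangent ρ q ξ → 0 < LeviForm ρ q ξ

/-- `Ω` is pseudoconvex with `C^∞` boundary, witnessed by the defining function `ρ`. -/
def IsPcxCinfBoundary {n : ℕ} (Ω : Set (En n)) (ρ : En n → ℝ) : Prop :=
  IsDefiningFunction Ω ⊤ ρ ∧
    ∀ q ∈ frontier Ω, ∀ ξ : En n, InCplxTangent ρ q ξ → 0 ≤ LeviForm ρ q ξ

/-- `F z = z + o(‖z - p‖^k)` as `z → p` within `Ω`. -/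
def LittleOh {n : ℕ} (Ω : Set (En n)) (F : En n → En n) (p : En n) (k : ℕ) : Prop :=
  Tendsto (fun z => ‖F z - z‖ / ‖z - p‖ ^ k) (𝓝[Ω] p) (𝓝 0)

/-- `F` is an automorphism of `Ω`: a holomorphic bijection with holomorphic inverse. -/
def IsAutomorphismOf {n : ℕ} (F : En n → En n) (Ω : Set (En n)) : Prop :=
  DifferentiableOn ℂ F Ω ∧ MapsTo F Ω Ω ∧
    ∃ G : En n → En n, DifferentiableOn ℂ G Ω ∧ MapsTo G Ω Ω ∧
      (∀ z ∈ Ω, G (F z) = z) ∧ (∀ z ∈ Ω, F (G z) = z)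

/-!
A strongly pseudoconvex point `p` carries a local plurisubharmonic peak function `u`. Composing `u`
with a holomorphic disc `γ` in `Ω` whose centre keeps a distance `η` from `p`, and comparing with
the barrier `κ (‖ζ‖⁻² - 1)`, gives a Hopf estimate `c (1 - ‖ζ‖) ≤ ‖γ ζ - p‖`; the Schwarz lemma
makes `c > 0` depend on `η` only. The affine discs `ζ ↦ p + t (1 - ζ) ν` lie in `Ω` for small `t`
and approach `p` at the rate `t ‖ν‖ (1 - x)` along `ζ = x → 1`. A holomorphic self-map `G` with
`‖G z - p‖ ≤ L ‖z - p‖` near `p` changes this rate by a factor of at most `L`, so once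
`L t ‖ν‖ < c` it cannot carry the centre `p + t ν` to distance `η` from `p`. Every iterate of a map
tangent to the identity satisfies this with `L = 2`, and the centre does not depend on the iterate.
-/

/-! ### Second derivatives and the complex Hessian -/

section SecondDerivative

variable {𝕜 E F G : Type*} [NontriviallyNormedField 𝕜] [NormedAddCommGroup E] [NormedSpace 𝕜 E]
  [NormedAddCommGroup F] [NormedSpace 𝕜 F] [NormedAddCommGroup G] [NormedSpace 𝕜 G]

theorem differentiableAt_fderiv_of_contDiffAt_two {f : E → F} {x : E} (hf : ContDiffAt 𝕜 2 f x) :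
    DifferentiableAt 𝕜 (fderiv 𝕜 f) x :=
  (hf.fderiv_right (m := 1) (by norm_num)).differentiableAt one_ne_zero

theorem eventually_differentiableAt_of_contDiffAt_two {f : E → F} {x : E}
    (hf : ContDiffAt 𝕜 2 f x) : ∀ᶠ y in 𝓝 x, DifferentiableAt 𝕜 f y :=
  (hf.eventually (by simp)).mono fun _ h => h.differentiableAt two_ne_zero

theorem fderiv_fderiv_comp_apply {g : E → G} {f : F → E} {x : F} (hg : ContDiffAt 𝕜 2 g (f x))
    (hf : ContDiffAt 𝕜 2 f x) (v w : F) :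
    fderiv 𝕜 (fderiv 𝕜 (g ∘ f)) x v w =
      fderiv 𝕜 (fderiv 𝕜 g) (f x) (fderiv 𝕜 f x v) (fderiv 𝕜 f x w) +
        fderiv 𝕜 g (f x) (fderiv 𝕜 (fderiv 𝕜 f) x v w) := by
  have hfx : HasFDerivAt f (fderiv 𝕜 f x) x := (hf.differentiableAt two_ne_zero).hasFDerivAt
  have chain : fderiv 𝕜 (g ∘ f) =ᶠ[𝓝 x] fun y => (fderiv 𝕜 g (f y)).comp (fderiv 𝕜 f y) := by
    filter_upwards [hf.continuousAt.eventually (eventually_differentiableAt_of_contDiffAt_two hg),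
      eventually_differentiableAt_of_contDiffAt_two hf] with y hgy hfy using fderiv_comp y hgy hfy
  have hgf : HasFDerivAt (fun y => fderiv 𝕜 g (f y)) _ x :=
    (differentiableAt_fderiv_of_contDiffAt_two hg).hasFDerivAt.comp x hfx
  have hfd := (differentiableAt_fderiv_of_contDiffAt_two hf).hasFDerivAt
  rw [chain.fderiv_eq, (hgf.clm_comp hfd).fderiv]
  simp [add_comm]

end SecondDerivative

theorem fderiv_fderiv_apply_self_nonpos_of_isLocalMax {E : Type*} [NormedAddCommGroup E]
    [NormedSpace ℝ E] {f : E → ℝ} {x : E} (hf : ContDiffAt ℝ 2 f x) (hmax : IsLocalMax f x)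
    (v : E) : fderiv ℝ (fderiv ℝ f) x v v ≤ 0 := by
  set line : ℝ → E := fun s => x + s • v with hline
  have hline0 : line 0 = x := by simp [hline]
  have hd (s : ℝ) : HasDerivAt line v s := by
    simpa [hline] using ((hasDerivAt_id s).smul_const v).const_add x
  have hlim : Tendsto line (𝓝 0) (𝓝 x) := hline0 ▸ (hd 0).continuousAt.tendsto
  have hmax' : IsLocalMax (f ∘ line) 0 := by
    simpa [IsLocalMax, IsMaxFilter, hline0] using hlim.eventually hmax
  have hderiv : deriv (f ∘ line) =ᶠ[𝓝 0] fun s => fderiv ℝ f (line s) v := by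
    filter_upwards [hlim.eventually (eventually_differentiableAt_of_contDiffAt_two hf)] with s hs
    exact (hs.hasFDerivAt.comp_hasDerivAt s (hd s)).deriv
  have hderiv2 : deriv (deriv (f ∘ line)) 0 = fderiv ℝ (fderiv ℝ f) x v v := by
    rw [hderiv.deriv_eq]
    have := (differentiableAt_fderiv_of_contDiffAt_two hf).hasFDerivAt
    rw [← hline0] at this
    simpa [hline0] using
      ((this.comp_hasDerivAt 0 (hd 0)).clm_apply (hasDerivAt_const 0 v)).deriv
  by_contra! hpos
  have hmin : IsLocalMin (f ∘ line) 0 :=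
    isLocalMin_of_deriv_deriv_pos (hderiv2 ▸ hpos) hmax'.deriv_eq_zero
      (ContinuousAt.comp (hline0 ▸ hf.continuousAt) (hd 0).continuousAt)
  have hconst : f ∘ line =ᶠ[𝓝 0] fun _ => (f ∘ line) 0 := by
    filter_upwards [hmax', hmin] with s using le_antisymm
  have : deriv (f ∘ line) =ᶠ[𝓝 0] fun _ => 0 := by simpa using hconst.deriv
  simp [← hderiv2, this.deriv_eq] at hpos

section ComplexHessian

variable {E F : Type*} [NormedAddCommGroup E] [NormedSpace ℂ E] [NormedAddCommGroup F]
  [NormedSpace ℂ F]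

/-- Four times the Levi form of `u` at `q` in direction `ξ`, on an arbitrary complex normed space.
The second derivative is an iterated `fderiv`, hence meaningful where `u` is `C²`. -/
def complexHessian (u : E → ℝ) (q ξ : E) : ℝ :=
  fderiv ℝ (fderiv ℝ u) q ξ ξ + fderiv ℝ (fderiv ℝ u) q (I • ξ) (I • ξ)

theorem complexHessian_smul (u : E → ℝ) (q ξ : E) (s : ℝ) :
    complexHessian u q (s • ξ) = s ^ 2 * complexHessian u q ξ := by
  simp only [complexHessian, smul_comm I s ξ, map_smul, smul_apply, smul_eq_mul]
  ring

theorem continuousAt_complexHessian {u : E → ℝ} {q : E} (hu : ContDiffAt ℝ 2 u q) (ξ : E) :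
    ContinuousAt (fun x : E × E => complexHessian u x.1 x.2) (q, ξ) := by
  have h : ContinuousAt (fun x : E × E => fderiv ℝ (fderiv ℝ u) x.1) (q, ξ) :=
    ((hu.fderiv_right (m := 1) (by norm_num)).fderiv_right (m := 0) (by norm_num)).continuousAt.comp
      continuousAt_fst
  unfold complexHessian
  fun_prop

theorem complexHessian_nonpos_of_isLocalMax {u : E → ℝ} {q : E} (hu : ContDiffAt ℝ 2 u q)
    (hmax : IsLocalMax u q) (ξ : E) : complexHessian u q ξ ≤ 0 :=
  add_nonpos (fderiv_fderiv_apply_self_nonpos_of_isLocalMax hu hmax ξ)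
    (fderiv_fderiv_apply_self_nonpos_of_isLocalMax hu hmax (I • ξ))

-- `γ''` is complex bilinear, so `γ''(Iv, Iv) = -γ''(v, v)` and the first-order terms cancel.
theorem complexHessian_comp {u : E → ℝ} {γ : F → E} {z : F} (hu : ContDiffAt ℝ 2 u (γ z))
    (hγ : ContDiffAt ℂ 2 γ z) (v : F) :
    complexHessian (u ∘ γ) z v = complexHessian u (γ z) (fderiv ℂ γ z v) := by
  have hγ' : fderiv ℝ γ z = (fderiv ℂ γ z).restrictScalars ℝ :=
    (hγ.differentiableAt two_ne_zero).fderiv_restrictScalars ℝ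
  have hγ'' (w : F) :
      fderiv ℝ (fderiv ℝ γ) z w w = fderiv ℂ (fderiv ℂ γ) z w w := by
    simpa [iteratedFDeriv_two_apply] using
      (DFunLike.congr_fun (hγ.restrictScalars_iteratedFDeriv (𝕜 := ℝ)) ![w, w]).symm
  have hcancel : fderiv ℂ (fderiv ℂ γ) z (I • v) (I • v) = -fderiv ℂ (fderiv ℂ γ) z v v := by
    simp [smul_smul]
  rw [complexHessian, complexHessian, fderiv_fderiv_comp_apply hu (hγ.restrict_scalars ℝ),
    fderiv_fderiv_comp_apply hu (hγ.restrict_scalars ℝ), hγ'', hγ'', hcancel, hγ', map_neg]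
  simp only [ContinuousLinearMap.coe_restrictScalars', map_smul]
  ring

theorem complexHessian_add {u v : E → ℝ} {q : E} (hu : ContDiffAt ℝ 2 u q)
    (hv : ContDiffAt ℝ 2 v q) (ξ : E) :
    complexHessian (fun x => u x + v x) q ξ = complexHessian u q ξ + complexHessian v q ξ := by
  have h : fderiv ℝ (fun x => u x + v x) =ᶠ[𝓝 q] fun x => fderiv ℝ u x + fderiv ℝ v x := by
    filter_upwards [eventually_differentiableAt_of_contDiffAt_two hu,
      eventually_differentiableAt_of_contDiffAt_two hv] with x hux hvx using fderiv_fun_add hux hvx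
  simp only [complexHessian, h.fderiv_eq, add_apply,
    fderiv_fun_add (differentiableAt_fderiv_of_contDiffAt_two hu)
      (differentiableAt_fderiv_of_contDiffAt_two hv)]
  ring

theorem complexHessian_const_mul {u : E → ℝ} {q : E} (hu : ContDiffAt ℝ 2 u q) (c : ℝ) (ξ : E) :
    complexHessian (fun x => c * u x) q ξ = c * complexHessian u q ξ := by
  have h : fderiv ℝ (fun x => c * u x) =ᶠ[𝓝 q] fun x => c • fderiv ℝ u x := by
    filter_upwards [eventually_differentiableAt_of_contDiffAt_two hu] with x hx
    exact fderiv_const_mul hx c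
  simp only [complexHessian, h.fderiv_eq, smul_apply, smul_eq_mul,
    fderiv_fun_const_smul (differentiableAt_fderiv_of_contDiffAt_two hu)]
  ring

theorem complexHessian_sq {u : E → ℝ} {q : E} (hu : ContDiffAt ℝ 2 u q) (ξ : E) :
    complexHessian (fun x => u x ^ 2) q ξ =
      2 * u q * complexHessian u q ξ + 2 * (fderiv ℝ u q ξ ^ 2 + fderiv ℝ u q (I • ξ) ^ 2) := by
  have h : fderiv ℝ (fun x => u x ^ 2) =ᶠ[𝓝 q] fun x => (2 * u x) • fderiv ℝ u x := by
    filter_upwards [eventually_differentiableAt_of_contDiffAt_two hu] with x hx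
    simp [fderiv_fun_pow 2 hx]
  have hderiv := ((hu.differentiableAt two_ne_zero).const_mul 2).hasFDerivAt.fun_smul
    (differentiableAt_fderiv_of_contDiffAt_two hu).hasFDerivAt
  simp only [complexHessian, h.fderiv_eq, hderiv.fderiv, add_apply, smul_apply,
    ContinuousLinearMap.smulRight_apply, smul_eq_mul,
    fderiv_const_mul (hu.differentiableAt two_ne_zero)]
  ring

theorem complexHessian_norm_sub_sq {E : Type*} [NormedAddCommGroup E] [InnerProductSpace ℂ E]
    (p q ξ : E) : complexHessian (fun x => ‖x - p‖ ^ 2) q ξ = 4 * ‖ξ‖ ^ 2 := by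
  let : InnerProductSpace ℝ E := InnerProductSpace.complexToReal
  let B : E →L[ℝ] E →L[ℝ] ℝ := (2 : ℝ) • innerSL ℝ
  have hB (v : E) : B v v = 2 * ‖v‖ ^ 2 := congrArg (2 * ·) (real_inner_self_eq_norm_sq v)
  have h : fderiv ℝ (fun x : E => ‖x - p‖ ^ 2) = fun x => B (x - p) := by
    ext1 x
    simpa [B, two_smul] using (((hasFDerivAt_id x).sub_const p).norm_sq).fderiv
  simp only [complexHessian, h, fderiv_comp_sub, B.fderiv, hB, norm_smul, norm_I, one_mul]
  ring

end ComplexHessian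

/-! ### A Hopf lemma on the unit disc -/

theorem exists_ge_of_complexHessian_pos_on_interior {E : Type*} [NormedAddCommGroup E]
    [NormedSpace ℂ E] {K : Set E} {v : E → ℝ} (hK : IsCompact K) (hv : ContinuousOn v K)
    (hv2 : ∀ z ∈ interior K, ContDiffAt ℝ 2 v z)
    (hpos : ∀ z ∈ interior K, ∃ ξ, 0 < complexHessian v z ξ) {z : E} (hz : z ∈ K) :
    ∃ w ∈ K \ interior K, v z ≤ v w := by
  obtain ⟨w, hw, hmax⟩ := hK.exists_isMaxOn ⟨z, hz⟩ hv
  refine ⟨w, ⟨hw, fun hwi => ?_⟩, hmax hz⟩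
  obtain ⟨ξ, hξ⟩ := hpos w hwi
  exact hξ.not_ge (complexHessian_nonpos_of_isLocalMax (hv2 w hwi)
    (hmax.isLocalMax (mem_interior_iff_mem_nhds.1 hwi)) ξ)

theorem contDiffAt_norm_inv_sq {z : ℂ} (hz : z ≠ 0) : ContDiffAt ℝ 2 (fun w : ℂ => ‖w⁻¹‖ ^ 2) z :=
  (contDiffAt_inv ℝ hz).norm_sq ℝ

theorem complexHessian_norm_inv_sq_pos {z : ℂ} (hz : z ≠ 0) :
    0 < complexHessian (fun w : ℂ => ‖w⁻¹‖ ^ 2) z 1 := by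
  have hcomp := complexHessian_comp (u := fun w : ℂ => ‖w - 0‖ ^ 2) (γ := fun w => w⁻¹) (z := z)
    ((contDiff_id.sub contDiff_const).norm_sq ℝ).contDiffAt (contDiffAt_inv ℂ hz) 1
  rw [complexHessian_norm_sub_sq] at hcomp
  simp only [sub_zero, comp_def] at hcomp
  rw [hcomp, fderiv_inv]
  simp [hz]

theorem add_mul_norm_inv_sq_le_of_le_on_boundary {K : Set ℂ} {v : ℂ → ℝ} {κ b : ℝ}
    (hK : IsCompact K) (hK0 : 0 ∉ K) (hv2 : ∀ z ∈ K, ContDiffAt ℝ 2 v z)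
    (hpsh : ∀ z ∈ interior K, 0 ≤ complexHessian v z 1) (hκ : 0 < κ)
    (hb : ∀ z ∈ K \ interior K, v z + κ * ‖z⁻¹‖ ^ 2 ≤ b) {z : ℂ} (hz : z ∈ K) :
    v z + κ * ‖z⁻¹‖ ^ 2 ≤ b := by
  have h0 {z : ℂ} (hz : z ∈ K) : z ≠ 0 := fun h => hK0 (h ▸ hz)
  have hbarrier {z : ℂ} (hz : z ∈ K) : ContDiffAt ℝ 2 (fun w : ℂ => κ * ‖w⁻¹‖ ^ 2) z :=
    contDiffAt_const.mul (contDiffAt_norm_inv_sq (h0 hz))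
  have hsum {z : ℂ} (hz : z ∈ K) : ContDiffAt ℝ 2 (fun w => v w + κ * ‖w⁻¹‖ ^ 2) z :=
    (hv2 z hz).add (hbarrier hz)
  have hpos (z : ℂ) (hz : z ∈ interior K) :
      0 < complexHessian (fun w => v w + κ * ‖w⁻¹‖ ^ 2) z 1 := by
    have hzK := interior_subset hz
    rw [complexHessian_add (hv2 z hzK) (hbarrier hzK),
      complexHessian_const_mul (contDiffAt_norm_inv_sq (h0 hzK))]
    exact add_pos_of_nonneg_of_pos (hpsh z hz)
      (mul_pos hκ (complexHessian_norm_inv_sq_pos (h0 hzK)))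
  obtain ⟨w, hw, hzw⟩ := exists_ge_of_complexHessian_pos_on_interior hK
    (fun z hz => (hsum hz).continuousAt.continuousWithinAt)
    (fun z hz => hsum (interior_subset hz)) (fun z hz => ⟨1, hpos z hz⟩) hz
  exact hzw.trans (hb w hw)

-- The barrier `κ (‖ζ‖⁻² - R⁻²)` is strictly subharmonic and vanishes on `‖ζ‖ = R`; let `R → 1`.
theorem le_neg_mul_norm_inv_sq_sub_one_of_complexHessian_nonneg {S : Set ℂ} {v : ℂ → ℝ}
    {r c κ : ℝ} (hS : ∀ R < 1, IsCompact (S ∩ closedBall 0 R)) (hr : 0 < r)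
    (hrS : ∀ z ∈ S, r ≤ ‖z‖) (hv2 : ∀ z ∈ S, ContDiffAt ℝ 2 v z)
    (hpsh : ∀ z ∈ interior S, 0 ≤ complexHessian v z 1) (hv : ∀ z ∈ S, v z ≤ 0)
    (hvc : ∀ z ∈ S \ interior S, v z ≤ -c) (hκ : 0 < κ) (hκc : κ * (r⁻¹ ^ 2 - 1) ≤ c)
    {ζ : ℂ} (hζS : ζ ∈ S) (hζ : ‖ζ‖ < 1) : v ζ ≤ -(κ * (‖ζ‖⁻¹ ^ 2 - 1)) := by
  have bound {R : ℝ} (hR : R ∈ Ioo ‖ζ‖ 1) : v ζ ≤ -(κ * (‖ζ‖⁻¹ ^ 2 - R⁻¹ ^ 2)) := by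
    obtain ⟨hζR, hR1⟩ := hR
    have hR0 : 0 < R := (norm_nonneg ζ).trans_lt hζR
    have hboundary (w : ℂ) (hw : w ∈ (S ∩ closedBall 0 R) \ interior (S ∩ closedBall 0 R)) :
        v w + κ * ‖w⁻¹‖ ^ 2 ≤ κ * R⁻¹ ^ 2 := by
      obtain ⟨⟨hwS, hwR⟩, hwi⟩ := hw
      rw [norm_inv]
      rcases (mem_closedBall_zero_iff.1 hwR).lt_or_eq with hwR | hwR
      · have hwi' : w ∉ interior S := fun h => hwi <| by
          rw [interior_inter]
          exact ⟨h, ball_subset_interior_closedBall (mem_ball_zero_iff.2 hwR)⟩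
        calc v w + κ * ‖w‖⁻¹ ^ 2 ≤ -c + κ * r⁻¹ ^ 2 := by
              gcongr
              exacts [hvc w ⟨hwS, hwi'⟩, hrS w hwS]
          _ ≤ κ * 1 := by linarith
          _ ≤ κ * R⁻¹ ^ 2 := by
              gcongr
              exact one_le_pow₀ ((one_le_inv₀ hR0).2 hR1.le)
      · simpa [hwR] using hv w hwS
    have := add_mul_norm_inv_sq_le_of_le_on_boundary (hS R hR1)
      (fun h => (hrS 0 h.1).not_gt (by simpa using hr)) (fun z hz => hv2 z hz.1)
      (fun z hz => hpsh z (interior_mono inter_subset_left hz)) hκ hboundary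
      ⟨hζS, mem_closedBall_zero_iff.2 hζR.le⟩
    rw [norm_inv] at this
    linarith
  have hlim : Tendsto (fun R : ℝ => -(κ * (‖ζ‖⁻¹ ^ 2 - R⁻¹ ^ 2))) (𝓝[<] 1)
      (𝓝 (-(κ * (‖ζ‖⁻¹ ^ 2 - 1⁻¹ ^ 2)))) :=
    ContinuousAt.continuousWithinAt (by fun_prop (disch := norm_num))
  simpa using ge_of_tendsto hlim (eventually_of_mem (Ioo_mem_nhdsLT hζ) fun R => bound)

/-! ### Local peak functions at strongly pseudoconvex points -/

theorem exists_forall_pos_add_mul_of_isCompact {X : Type*} [TopologicalSpace X] {K : Set X}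
    {f g : X → ℝ} (hK : IsCompact K) (hf : Continuous f) (hg : Continuous g) (hg0 : ∀ x, 0 ≤ g x)
    (hfg : ∀ x ∈ K, g x = 0 → 0 < f x) : ∃ A : ℝ, ∀ x ∈ K, 0 < f x + A * g x := by
  refine hK.elim_directed_cover (fun A : ℝ => {x | 0 < f x + A * g x})
    (fun A => isOpen_lt continuous_const (hf.add (hg.const_mul A))) (fun x hx => mem_iUnion.2 ?_)
    (directed_of_isDirected_le fun A B hAB x => ?_)
  · rcases (hg0 x).eq_or_lt with h | h
    · exact ⟨0, by simpa using hfg x hx h.symm⟩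
    · obtain ⟨A, hA⟩ := exists_gt (-f x / g x)
      exact ⟨A, show 0 < f x + A * g x by linarith [(div_lt_iff₀ h).1 hA]⟩
  · simp only [mem_ofPred_eq]
    have := mul_le_mul_of_nonneg_right hAB (hg0 x)
    exact fun hA => by linarith

section LocalPeak

variable {E : Type*} [NormedAddCommGroup E]

/-- `ρ` is a `C²` defining function for `Ω` near the boundary point `p`. -/
structure IsLocalDefiningFunction [NormedSpace ℝ E] (Ω : Set E) (ρ : E → ℝ) (p : E) : Prop where
  contDiffAt : ContDiffAt ℝ 2 ρ p
  apply_eq_zero : ρ p = 0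
  fderiv_ne_zero : fderiv ℝ ρ p ≠ 0
  eventually_mem_iff : ∀ᶠ q in 𝓝 p, q ∈ Ω ↔ ρ q < 0

/-- The Levi form of `ρ` at `p` is positive definite on the complex tangent space of `{ρ = 0}`:
`StronglyPcxAt` on an arbitrary complex normed space. -/
def IsStronglyPseudoconvexAt [NormedSpace ℂ E] (ρ : E → ℝ) (p : E) : Prop :=
  ∀ ξ : E, ξ ≠ 0 → fderiv ℝ ρ p ξ = 0 → fderiv ℝ ρ p (I • ξ) = 0 → 0 < complexHessian ρ p ξ

/-- `u` is a local `C²` plurisubharmonic peak function for `Ω` at the boundary point `p`, with at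
least quadratic decay. -/
structure IsLocalPeakFunction [NormedSpace ℂ E] (Ω : Set E) (u : E → ℝ) (p : E) : Prop where
  contDiffAt : ContDiffAt ℝ 2 u p
  apply_eq_zero : u p = 0
  eventually_complexHessian_nonneg : ∀ᶠ q in 𝓝 p, ∀ ξ, 0 ≤ complexHessian u q ξ
  exists_eventually_le : ∃ ε > 0, ∀ᶠ q in 𝓝 p, q ∈ Ω → u q ≤ -(ε * ‖q - p‖ ^ 2)

theorem eventually_forall_complexHessian_nonneg [NormedSpace ℂ E] [ProperSpace E] {u : E → ℝ}
    {p : E} (hu : ContDiffAt ℝ 2 u p) (hpos : ∀ ξ ∈ sphere (0 : E) 1, 0 < complexHessian u p ξ) :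
    ∀ᶠ q in 𝓝 p, ∀ ξ, 0 ≤ complexHessian u q ξ := by
  have hev : ∀ᶠ q in 𝓝 p, ∀ ξ ∈ sphere (0 : E) 1, 0 < complexHessian u q ξ :=
    (isCompact_sphere (0 : E) 1).eventually_forall_of_forall_eventually fun ξ hξ =>
      (continuousAt_complexHessian hu ξ).eventually (lt_mem_nhds (hpos ξ hξ))
  filter_upwards [hev] with q hq ξ
  rcases eq_or_ne ξ 0 with rfl | hξ
  · simp [complexHessian]
  · rw [← smul_inv_smul₀ (norm_ne_zero_iff.2 hξ) ξ, complexHessian_smul]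
    have hunit : ‖ξ‖⁻¹ • ξ ∈ sphere (0 : E) 1 := by simp [norm_smul, hξ]
    exact mul_nonneg (sq_nonneg _) (hq _ hunit).le

theorem IsStronglyPseudoconvexAt.exists_forall_le [NormedSpace ℂ E] [ProperSpace E] {ρ : E → ℝ}
    {p : E} (hspc : IsStronglyPseudoconvexAt ρ p) (hρ : ContDiffAt ℝ 2 ρ p) :
    ∃ A : ℝ, ∃ a > 0, ∀ ξ ∈ sphere (0 : E) 1,
      a ≤ complexHessian ρ p ξ + A * (fderiv ℝ ρ p ξ ^ 2 + fderiv ℝ ρ p (I • ξ) ^ 2) := by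
  have hH : Continuous (complexHessian ρ p) := continuous_iff_continuousAt.2 fun ξ =>
    (continuousAt_complexHessian hρ ξ).comp (f := fun ξ => (p, ξ)) (by fun_prop)
  have hT : Continuous fun ξ => fderiv ℝ ρ p ξ ^ 2 + fderiv ℝ ρ p (I • ξ) ^ 2 := by fun_prop
  obtain ⟨A, hpos⟩ := exists_forall_pos_add_mul_of_isCompact (isCompact_sphere (0 : E) 1) hH hT
    (fun ξ => by positivity) fun ξ hξ hTξ => by
      obtain ⟨h1, h2⟩ := (add_eq_zero_iff_of_nonneg (sq_nonneg _) (sq_nonneg _)).1 hTξ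
      exact hspc ξ (ne_zero_of_mem_unit_sphere ⟨ξ, hξ⟩) (pow_eq_zero_iff two_ne_zero |>.1 h1)
        (pow_eq_zero_iff two_ne_zero |>.1 h2)
  obtain ⟨a, ha, hle⟩ := (isCompact_sphere (0 : E) 1).exists_forall_le'
    (hH.add (hT.const_mul A)).continuousOn hpos
  exact ⟨A, a, ha, hle⟩

variable [InnerProductSpace ℂ E]

theorem complexHessian_quadratic_perturbation {ρ : E → ℝ} {p : E} (hρ : ContDiffAt ℝ 2 ρ p)
    (hp : ρ p = 0) (A ε : ℝ) (ξ : E) :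
    complexHessian (fun q => ρ q + A * ρ q ^ 2 + -ε * ‖q - p‖ ^ 2) p ξ =
      complexHessian ρ p ξ + 2 * A * (fderiv ℝ ρ p ξ ^ 2 + fderiv ℝ ρ p (I • ξ) ^ 2)
        - 4 * ε * ‖ξ‖ ^ 2 := by
  have hsq : ContDiffAt ℝ 2 (fun q => A * ρ q ^ 2) p := contDiffAt_const.mul (hρ.pow 2)
  have hn : ContDiffAt ℝ 2 (fun q : E => ‖q - p‖ ^ 2) p :=
    (contDiffAt_id.sub contDiffAt_const).norm_sq ℂ
  rw [complexHessian_add (hρ.add hsq) (contDiffAt_const.mul hn), complexHessian_add hρ hsq,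
    complexHessian_const_mul (hρ.pow 2), complexHessian_const_mul hn, complexHessian_sq hρ,
    complexHessian_norm_sub_sq, hp]
  ring

theorem IsLocalDefiningFunction.exists_isLocalPeakFunction [ProperSpace E] {Ω : Set E}
    {ρ : E → ℝ} {p : E} (hρ : IsLocalDefiningFunction Ω ρ p)
    (hspc : IsStronglyPseudoconvexAt ρ p) : ∃ u, IsLocalPeakFunction Ω u p := by
  obtain ⟨A, a, ha, hHess⟩ := hspc.exists_forall_le hρ.contDiffAt
  have hu : ContDiffAt ℝ 2 (fun q => ρ q + A / 2 * ρ q ^ 2 + -(a / 8) * ‖q - p‖ ^ 2) p :=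
    (hρ.contDiffAt.add (contDiffAt_const.mul (hρ.contDiffAt.pow 2))).add
      (contDiffAt_const.mul ((contDiffAt_id.sub contDiffAt_const).norm_sq ℂ))
  refine ⟨_, hu, by simp [hρ.apply_eq_zero],
    eventually_forall_complexHessian_nonneg hu fun ξ hξ => ?_, a / 8, by positivity, ?_⟩
  · rw [complexHessian_quadratic_perturbation hρ.contDiffAt hρ.apply_eq_zero,
      mem_sphere_zero_iff_norm.1 hξ]
    linarith [hHess ξ hξ]
  · have hfactor : ContinuousAt (fun q => 1 + A / 2 * ρ q) p :=
      continuousAt_const.add (continuousAt_const.mul hρ.contDiffAt.continuousAt)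
    have hpos : ∀ᶠ q in 𝓝 p, 0 < 1 + A / 2 * ρ q :=
      hfactor.eventually (lt_mem_nhds (by simp [hρ.apply_eq_zero]))
    filter_upwards [hpos, hρ.eventually_mem_iff] with q hq hmem hqΩ
    linarith [mul_neg_of_neg_of_pos (hmem.1 hqΩ) hq]

end LocalPeak

/-! ### Holomorphic discs near a peak point -/

section HolomorphicDisc

variable {E : Type*} [NormedAddCommGroup E] [NormedSpace ℂ E] {Ω : Set E} {u : E → ℝ} {p : E}

theorem isCompact_ball_inter_preimage_inter_closedBall {X Y : Type*} [PseudoMetricSpace X]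
    [ProperSpace X] [TopologicalSpace Y] {f : X → Y} {T : Set X} {K : Set Y} {x : X} {r R : ℝ}
    (hf : ContinuousOn f (ball x r)) (hT : IsClosed T) (hK : IsClosed K) (hR : R < r) :
    IsCompact (ball x r ∩ T ∩ f ⁻¹' K ∩ closedBall x R) := by
  have hsub : closedBall x R ⊆ ball x r := closedBall_subset_ball hR
  have hclosed : IsClosed (closedBall x R ∩ f ⁻¹' K ∩ T) :=
    ((hf.mono hsub).preimage_isClosed_of_isClosed isClosed_closedBall hK).inter hT
  have hcompact := (isCompact_closedBall x R).of_isClosed_subset hclosed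
    (inter_subset_left.trans inter_subset_left)
  convert hcompact using 1
  ext y
  have := @hsub y
  simp only [mem_inter_iff]
  tauto

theorem le_neg_mul_norm_inv_sq_sub_one_of_holomorphicDisc [CompleteSpace E] {γ : ℂ → E}
    {δ ε r κ : ℝ} (hu : ∀ q ∈ closedBall p δ, ContDiffAt ℝ 2 u q)
    (hpsh : ∀ q ∈ closedBall p δ, ∀ ξ, 0 ≤ complexHessian u q ξ)
    (hle : ∀ q ∈ closedBall p δ, q ∈ Ω → u q ≤ -(ε * ‖q - p‖ ^ 2)) (hε : 0 ≤ ε)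
    (hγ : DifferentiableOn ℂ γ (ball 0 1)) (hγΩ : MapsTo γ (ball 0 1) Ω) (hr : 0 < r)
    (hfar : ∀ ζ ∈ ball (0 : ℂ) 1, ‖ζ‖ ≤ r → δ ≤ ‖γ ζ - p‖) (hκ : 0 < κ)
    (hκr : κ * (r⁻¹ ^ 2 - 1) ≤ ε * δ ^ 2) {ζ : ℂ} (hζ : ζ ∈ ball (0 : ℂ) 1) (hrζ : r ≤ ‖ζ‖)
    (hγζ : γ ζ ∈ closedBall p δ) : u (γ ζ) ≤ -(κ * (‖ζ‖⁻¹ ^ 2 - 1)) := by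
  set S : Set ℂ := ball 0 1 ∩ {w | r ≤ ‖w‖} ∩ γ ⁻¹' closedBall p δ
  have hγ2 (w : ℂ) (hw : w ∈ ball (0 : ℂ) 1) : ContDiffAt ℂ 2 γ w :=
    (hγ.analyticAt (isOpen_ball.mem_nhds hw)).contDiffAt
  have hboundary (w : ℂ) (hw : w ∈ S \ interior S) : u (γ w) ≤ -(ε * δ ^ 2) := by
    obtain ⟨⟨⟨hw1, -⟩, hγw⟩, hwi⟩ := hw
    have hδ : ‖γ w - p‖ = δ := by
      refine (mem_closedBall_iff_norm.1 hγw).antisymm (not_lt.1 fun hlt => hwi ?_)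
      have hrw : r < ‖w‖ := lt_of_not_ge fun h => (hfar w hw1 h).not_gt hlt
      rw [mem_interior_iff_mem_nhds]
      filter_upwards [isOpen_ball.mem_nhds hw1, continuous_norm.continuousAt.eventually
        (lt_mem_nhds hrw), (hγ2 w hw1).continuousAt.eventually
        (closedBall_mem_nhds_of_mem (mem_ball_iff_norm.2 hlt))] with x h1 h2 h3
      exact ⟨⟨h1, h2.le⟩, h3⟩
    simpa [hδ] using hle _ hγw (hγΩ hw1)
  refine le_neg_mul_norm_inv_sq_sub_one_of_complexHessian_nonneg (S := S) (v := u ∘ γ)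
    (fun R hR => isCompact_ball_inter_preimage_inter_closedBall hγ.continuousOn
      (isClosed_le continuous_const continuous_norm) isClosed_closedBall hR) hr
    (fun w hw => hw.1.2)
    (fun w hw => (hu _ hw.2).comp w ((hγ2 w hw.1.1).restrict_scalars ℝ)) (fun w hw => ?_)
    (fun w hw => (hle _ hw.2 (hγΩ hw.1.1)).trans (neg_nonpos.2 (by positivity))) hboundary hκ hκr
    ⟨⟨hζ, hrζ⟩, hγζ⟩ (mem_ball_zero_iff.1 hζ)
  have hwS := interior_subset hw
  rw [complexHessian_comp (hu _ hwS.2) (hγ2 w hwS.1.1)]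
  exact hpsh _ hwS.2 _

theorem norm_sub_ge_of_holomorphicDisc {γ : ℂ → E} {M η : ℝ} (hM : 0 < M)
    (hMΩ : ∀ x ∈ Ω, ∀ y ∈ Ω, dist x y ≤ M) (hγ : DifferentiableOn ℂ γ (ball 0 1))
    (hγΩ : MapsTo γ (ball 0 1) Ω) (hη : η ≤ ‖γ 0 - p‖) {ζ : ℂ} (hζ : ζ ∈ ball (0 : ℂ) 1)
    (hζM : ‖ζ‖ ≤ η / (2 * M)) : η / 2 ≤ ‖γ ζ - p‖ := by
  have hSchwarz : dist (γ ζ) (γ 0) ≤ M / 1 * dist ζ 0 :=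
    dist_le_div_mul_dist_of_mapsTo_ball hγ
      (fun w hw => hMΩ _ (hγΩ hw) _ (hγΩ (mem_ball_self one_pos))) hζ
  rw [div_one, dist_zero_right, dist_comm, dist_eq_norm] at hSchwarz
  rw [le_div_iff₀ (by positivity)] at hζM
  linarith [norm_sub_le_norm_sub_add_norm_sub (γ 0) (γ ζ) p]

theorem one_sub_le_inv_sq_sub_one {x : ℝ} (hx : 0 < x) (hx1 : x ≤ 1) : 1 - x ≤ x⁻¹ ^ 2 - 1 := by
  have hinv : 1 ≤ x⁻¹ := (one_le_inv₀ hx).2 hx1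
  have hsq : (0 : ℝ) ≤ (1 - x) * (x⁻¹ - 1) := mul_nonneg (sub_nonneg.2 hx1) (sub_nonneg.2 hinv)
  have hmul : x * x⁻¹ = 1 := mul_inv_cancel₀ hx.ne'
  linarith [le_self_pow₀ hinv two_ne_zero]

theorem IsLocalPeakFunction.exists_closedBall (hu : IsLocalPeakFunction Ω u p) {η : ℝ}
    (hη : 0 < η) :
    ∃ ε > 0, ∃ C > 0, ∃ δ > 0, δ ≤ η ∧ ∀ q ∈ closedBall p δ, ContDiffAt ℝ 2 u q ∧
      (∀ ξ, 0 ≤ complexHessian u q ξ) ∧ (q ∈ Ω → u q ≤ -(ε * ‖q - p‖ ^ 2)) ∧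
        -(C * ‖q - p‖) ≤ u q := by
  obtain ⟨ε, hε, hle⟩ := hu.exists_eventually_le
  obtain ⟨C, hC, hCu⟩ := (hu.contDiffAt.differentiableAt two_ne_zero).isBigO_sub.exists_pos
  have hlower : ∀ᶠ q in 𝓝 p, -(C * ‖q - p‖) ≤ u q := hCu.bound.mono fun q hq => by
    simpa [hu.apply_eq_zero] using neg_le_of_abs_le hq
  obtain ⟨δ, hδ, hnear⟩ := nhds_basis_closedBall.eventually_iff.1
    ((hu.contDiffAt.eventually (by simp)).and
      (hu.eventually_complexHessian_nonneg.and (hle.and hlower)))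
  exact ⟨ε, hε, C, hC, min δ η, lt_min hδ hη, min_le_right _ _, fun q hq =>
    hnear (closedBall_subset_closedBall (min_le_left _ _) hq)⟩

theorem IsLocalPeakFunction.exists_mul_one_sub_norm_le [CompleteSpace E]
    (hu : IsLocalPeakFunction Ω u p) (hΩ : Bornology.IsBounded Ω) {η : ℝ} (hη : 0 < η) :
    ∃ c > 0, ∀ γ : ℂ → E, DifferentiableOn ℂ γ (ball 0 1) → MapsTo γ (ball 0 1) Ω →
      η ≤ ‖γ 0 - p‖ → ∀ ζ ∈ ball (0 : ℂ) 1, c * (1 - ‖ζ‖) ≤ ‖γ ζ - p‖ := by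
  obtain ⟨ε, hε, C, hC, δ, hδ, hδη, hnear⟩ := hu.exists_closedBall (half_pos hη)
  obtain ⟨M, hM, hMΩ⟩ : ∃ M > 0, ∀ x ∈ Ω, ∀ y ∈ Ω, dist x y ≤ M := by
    obtain ⟨M, hM⟩ := isBounded_iff.1 hΩ
    exact ⟨max M 1, by positivity, fun x hx y hy => (hM hx hy).trans (le_max_left _ _)⟩
  set r := η / (2 * M)
  have hr : 0 < r := by positivity
  set κ := ε * δ ^ 2 * r ^ 2 with hκdef
  have hκr : κ * (r⁻¹ ^ 2 - 1) ≤ ε * δ ^ 2 :=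
    calc κ * (r⁻¹ ^ 2 - 1) = ε * δ ^ 2 - κ := by rw [hκdef]; field_simp
      _ ≤ ε * δ ^ 2 := sub_le_self _ (by positivity)
  refine ⟨min δ (κ / C), by positivity, fun γ hγ hγΩ hγη ζ hζ => ?_⟩
  have hζ1 : ‖ζ‖ < 1 := mem_ball_zero_iff.1 hζ
  have hfar (w : ℂ) (hw : w ∈ ball (0 : ℂ) 1) (hwr : ‖w‖ ≤ r) : δ ≤ ‖γ w - p‖ :=
    hδη.trans (norm_sub_ge_of_holomorphicDisc hM hMΩ hγ hγΩ hγη hw hwr)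
  by_cases hγζ : δ ≤ ‖γ ζ - p‖
  · calc min δ (κ / C) * (1 - ‖ζ‖) ≤ δ * 1 := by
          gcongr
          exacts [min_le_left _ _, by linarith [norm_nonneg ζ]]
      _ ≤ ‖γ ζ - p‖ := by rwa [mul_one]
  have hrζ : r < ‖ζ‖ := lt_of_not_ge fun h => hγζ (hfar ζ hζ h)
  have hmem : γ ζ ∈ closedBall p δ := mem_closedBall_iff_norm.2 (le_of_not_ge hγζ)
  have hupper := le_neg_mul_norm_inv_sq_sub_one_of_holomorphicDisc (fun q hq => (hnear q hq).1)
    (fun q hq => (hnear q hq).2.1) (fun q hq => (hnear q hq).2.2.1) hε.le hγ hγΩ hr hfar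
    (show 0 < κ by positivity) hκr hζ hrζ.le hmem
  have hlower : -(C * ‖γ ζ - p‖) ≤ u (γ ζ) := (hnear _ hmem).2.2.2
  calc min δ (κ / C) * (1 - ‖ζ‖) ≤ κ / C * (‖ζ‖⁻¹ ^ 2 - 1) :=
        mul_le_mul (min_le_right _ _) (one_sub_le_inv_sq_sub_one (hr.trans hrζ) hζ1.le)
          (sub_nonneg.2 hζ1.le) (by positivity)
    _ ≤ ‖γ ζ - p‖ := by
        rw [div_mul_eq_mul_div, div_le_iff₀' hC]
        linarith

end HolomorphicDisc

/-! ### Internally tangent discs -/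

theorem isBigO_sub_sub_fderiv_of_contDiffAt_two {E F : Type*} [NormedAddCommGroup E]
    [NormedSpace ℝ E] [NormedAddCommGroup F] [NormedSpace ℝ F] {f : E → F} {p : E}
    (hf : ContDiffAt ℝ 2 f p) :
    (fun q => f q - f p - fderiv ℝ f p (q - p)) =O[𝓝 p] fun q => ‖q - p‖ ^ 2 := by
  obtain ⟨C, hC, hbound⟩ :=
    (differentiableAt_fderiv_of_contDiffAt_two hf).isBigO_sub.exists_pos
  obtain ⟨δ, hδ, hnear⟩ := nhds_basis_ball.eventually_iff.1
    ((eventually_differentiableAt_of_contDiffAt_two hf).and hbound.bound)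
  refine .of_bound C (eventually_of_mem (ball_mem_nhds p hδ) fun q hq => ?_)
  have hsub {x : E} (hx : x ∈ closedBall p ‖q - p‖) : x ∈ ball p δ :=
    closedBall_subset_ball (mem_ball_iff_norm.1 hq) hx
  have hderiv (x : E) (hx : x ∈ closedBall p ‖q - p‖) :
      ‖fderiv ℝ f x - fderiv ℝ f p‖ ≤ C * ‖q - p‖ :=
    (hnear (hsub hx)).2.trans (by gcongr; exact mem_closedBall_iff_norm.1 hx)
  have htaylor := (convex_closedBall p ‖q - p‖).norm_image_sub_le_of_norm_fderiv_le'
    (fun x hx => (hnear (hsub hx)).1) hderiv (mem_closedBall_self (norm_nonneg _))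
    (mem_closedBall_iff_norm.2 le_rfl)
  simpa [sq, mul_assoc] using htaylor

section TangentDisc

variable {E : Type*} [NormedAddCommGroup E] [NormedSpace ℂ E]

theorem exists_forall_apply_smul_eq_neg_re {ℓ : E →L[ℝ] ℝ} (hℓ : ℓ ≠ 0) :
    ∃ ν, ∀ w : ℂ, ℓ (w • ν) = -w.re := by
  obtain ⟨v, hv⟩ := DFunLike.ne_iff.1 hℓ
  set L : E →L[ℂ] ℂ := StrongDual.extendRCLike ℓ
  have hre (x : E) : (L x).re = ℓ x := StrongDual.re_extendRCLike_apply (𝕜 := ℂ) ℓ x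
  have hLv : L v ≠ 0 := fun h => hv (by simp [← hre, h])
  exact ⟨-(L v)⁻¹ • v, fun w => by simp [← hre, hLv]⟩

/-- The affine disc `ζ ↦ p + t (1 - ζ) ν`, which reaches `p` at the boundary point `ζ = 1` and is
centred at `p + t ν`. -/
def tangentDisc (p ν : E) (t : ℝ) (ζ : ℂ) : E := p + ((t : ℂ) * (1 - ζ)) • ν

theorem differentiable_tangentDisc (p ν : E) (t : ℝ) : Differentiable ℂ (tangentDisc p ν t) := by
  unfold tangentDisc
  fun_prop

theorem norm_tangentDisc_sub (p ν : E) (t : ℝ) (ζ : ℂ) :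
    ‖tangentDisc p ν t ζ - p‖ = |t| * ‖1 - ζ‖ * ‖ν‖ := by
  simp [tangentDisc, norm_smul]

theorem eventually_mapsTo_tangentDisc_ball {p : E} {U : Set E} (hU : U ∈ 𝓝 p) (ν : E) :
    ∀ᶠ t in 𝓝 0, MapsTo (tangentDisc p ν t) (ball 0 1) U := by
  have hcont : Continuous fun x : ℝ × ℂ => tangentDisc p ν x.1 x.2 := by
    unfold tangentDisc
    fun_prop
  have hev : ∀ᶠ t in 𝓝 (0 : ℝ), ∀ ζ ∈ closedBall (0 : ℂ) 1, tangentDisc p ν t ζ ∈ U :=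
    (isCompact_closedBall (0 : ℂ) 1).eventually_forall_of_forall_eventually fun ζ _ =>
      hcont.continuousAt.eventually (by simpa [tangentDisc] using hU)
  exact hev.mono fun t ht ζ hζ => ht ζ (ball_subset_closedBall hζ)

theorem tendsto_tangentDisc_nhdsWithin {Ω : Set E} {p ν : E} {t : ℝ}
    (hΩ : MapsTo (tangentDisc p ν t) (ball 0 1) Ω) :
    Tendsto (fun x : ℝ => tangentDisc p ν t x) (𝓝[<] 1) (𝓝[Ω] p) := by
  refine tendsto_nhdsWithin_iff.2 ⟨?_, ?_⟩
  · have hcont : Continuous fun x : ℝ => tangentDisc p ν t x :=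
      (differentiable_tangentDisc p ν t).continuous.comp continuous_ofReal
    simpa [tangentDisc] using (hcont.tendsto 1).mono_left (nhdsWithin_le_nhds (s := Iio 1))
  · filter_upwards [Ioo_mem_nhdsLT (zero_lt_one (α := ℝ))] with x hx
    exact hΩ (by simpa [abs_of_pos hx.1] using hx.2)

theorem norm_one_sub_sq_le {ζ : ℂ} (hζ : ‖ζ‖ ≤ 1) : ‖1 - ζ‖ ^ 2 ≤ 2 * (1 - ζ.re) := by
  have h : ‖1 - ζ‖ ^ 2 = 1 - 2 * ζ.re + ‖ζ‖ ^ 2 := by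
    simp only [← normSq_eq_norm_sq, normSq_apply, sub_re, sub_im, one_re, one_im]
    ring
  linarith [pow_le_one₀ (norm_nonneg ζ) hζ (n := 2)]

-- On the disc `ρ ≤ -t (1 - re ζ) + C t² ‖1 - ζ‖² ‖ν‖²`, and `‖1 - ζ‖² ≤ 2 (1 - re ζ)`.
theorem IsLocalDefiningFunction.exists_mapsTo_tangentDisc {Ω : Set E} {ρ : E → ℝ} {p : E}
    (hρ : IsLocalDefiningFunction Ω ρ p) :
    ∃ ν, ∀ᶠ t in 𝓝[>] 0, MapsTo (tangentDisc p ν t) (ball 0 1) Ω := by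
  obtain ⟨ν, hν⟩ := exists_forall_apply_smul_eq_neg_re hρ.fderiv_ne_zero
  obtain ⟨C, hC, htaylor⟩ :=
    (isBigO_sub_sub_fderiv_of_contDiffAt_two hρ.contDiffAt).exists_pos
  have hnear : ∀ᶠ t in 𝓝[>] 0, MapsTo (tangentDisc p ν t) (ball 0 1) {q | (q ∈ Ω ↔ ρ q < 0) ∧ _} :=
    (eventually_mapsTo_tangentDisc_ball (hρ.eventually_mem_iff.and htaylor.bound) ν).filter_mono
      nhdsWithin_le_nhds
  have hsmall : ∀ᶠ t : ℝ in 𝓝[>] 0, 2 * C * ‖ν‖ ^ 2 * t < 1 :=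
    (Continuous.continuousWithinAt (by fun_prop)).eventually (gt_mem_nhds (by simp))
  refine ⟨ν, ?_⟩
  filter_upwards [hnear, hsmall, self_mem_nhdsWithin] with t hmaps ht1 (ht0 : 0 < t) ζ hζ
  obtain ⟨hmem, hbound⟩ := hmaps hζ
  have hζ1 : ‖ζ‖ < 1 := mem_ball_zero_iff.1 hζ
  have hre : 0 < 1 - ζ.re := by linarith [re_le_norm ζ]
  have hderiv : fderiv ℝ ρ p (tangentDisc p ν t ζ - p) = -(t * (1 - ζ.re)) := by
    simp [tangentDisc, hν]
  have hquad : C * ‖tangentDisc p ν t ζ - p‖ ^ 2 ≤ 2 * C * ‖ν‖ ^ 2 * t * (t * (1 - ζ.re)) :=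
    calc C * ‖tangentDisc p ν t ζ - p‖ ^ 2 = C * t ^ 2 * ‖ν‖ ^ 2 * ‖1 - ζ‖ ^ 2 := by
          rw [norm_tangentDisc_sub, abs_of_pos ht0]
          ring
      _ ≤ C * t ^ 2 * ‖ν‖ ^ 2 * (2 * (1 - ζ.re)) := by
          gcongr
          exact norm_one_sub_sq_le hζ1.le
      _ = 2 * C * ‖ν‖ ^ 2 * t * (t * (1 - ζ.re)) := by ring
  rw [hρ.apply_eq_zero, hderiv, norm_pow, norm_norm] at hbound
  have hlt : 2 * C * ‖ν‖ ^ 2 * t * (t * (1 - ζ.re)) < t * (1 - ζ.re) :=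
    mul_lt_of_lt_one_left (mul_pos ht0 hre) ht1
  exact hmem.2 (by linarith [le_of_abs_le hbound])

end TangentDisc

/-! ### Self-maps tangent to the identity -/

section SelfMap

open Asymptotics

variable {E : Type*} [NormedAddCommGroup E]

theorem tendsto_nhdsWithin_of_isLittleO_sub {Ω : Set E} {F : E → E} {p : E} (hF : MapsTo F Ω Ω)
    (ho : (fun z => F z - z) =o[𝓝[Ω] p] fun z => z - p) : Tendsto F (𝓝[Ω] p) (𝓝[Ω] p) := by
  have hid : Tendsto (fun z => z - p) (𝓝[Ω] p) (𝓝 0) :=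
    tendsto_sub_nhds_zero_iff.2 (tendsto_id.mono_left nhdsWithin_le_nhds)
  refine tendsto_nhdsWithin_iff.2 ⟨tendsto_sub_nhds_zero_iff.1 ?_,
    eventually_mem_nhdsWithin.mono fun z hz => hF hz⟩
  simpa using (ho.isBigO.trans_tendsto hid).add hid

theorem isLittleO_iterate_sub {Ω : Set E} {F : E → E} {p : E} (hF : MapsTo F Ω Ω)
    (ho : (fun z => F z - z) =o[𝓝[Ω] p] fun z => z - p) (m : ℕ) :
    (fun z => F^[m] z - z) =o[𝓝[Ω] p] fun z => z - p := by
  have hO : (fun z => F z - p) =O[𝓝[Ω] p] fun z => z - p := by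
    simpa using ho.isBigO.add (isBigO_refl (fun z => z - p) (𝓝[Ω] p))
  induction m with
  | zero => simp
  | succ m ih =>
    have hstep := (ih.comp_tendsto (tendsto_nhdsWithin_of_isLittleO_sub hF ho)).trans_isBigO hO
    simpa [comp_def] using hstep.add ho

theorem IsLocalPeakFunction.exists_forall_mem_of_isBigOWith [NormedSpace ℂ E] [CompleteSpace E]
    {Ω V : Set E} {u : E → ℝ} {p ν : E} (hu : IsLocalPeakFunction Ω u p)
    (hΩ : Bornology.IsBounded Ω)
    (hν : ∀ᶠ t in 𝓝[>] 0, MapsTo (tangentDisc p ν t) (ball 0 1) Ω) (hV : V ∈ 𝓝 p) (L : ℝ) :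
    ∃ z ∈ V ∩ Ω, ∀ G : E → E, DifferentiableOn ℂ G Ω → MapsTo G Ω Ω →
      IsBigOWith L (𝓝[Ω] p) (fun z => G z - p) (fun z => z - p) → G z ∈ V := by
  obtain ⟨η, hη, hηV⟩ := Metric.mem_nhds_iff.1 hV
  obtain ⟨c, hc, hdisc⟩ := hu.exists_mul_one_sub_norm_le hΩ hη
  have hsmall : ∀ᶠ t : ℝ in 𝓝[>] 0, L * (t * ‖ν‖) < c :=
    (Continuous.continuousWithinAt (by fun_prop)).eventually (gt_mem_nhds (by simpa using hc))
  obtain ⟨t, hφΩ, htc, hφV, ht⟩ := (hν.and (hsmall.and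
    (((eventually_mapsTo_tangentDisc_ball hV ν).filter_mono nhdsWithin_le_nhds).and
      eventually_mem_nhdsWithin))).exists
  have h0 : (0 : ℂ) ∈ ball (0 : ℂ) 1 := mem_ball_self one_pos
  refine ⟨tangentDisc p ν t 0, ⟨hφV h0, hφΩ h0⟩, fun G hG hGΩ hGO => ?_⟩
  by_contra hout
  have hγη : η ≤ ‖G (tangentDisc p ν t 0) - p‖ :=
    not_lt.1 fun h => hout (hηV (mem_ball_iff_norm.2 h))
  have hlower := hdisc (G ∘ tangentDisc p ν t)
    (hG.comp (differentiable_tangentDisc p ν t).differentiableOn hφΩ) (hGΩ.comp hφΩ) hγη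
  have hupper := (tendsto_tangentDisc_nhdsWithin hφΩ).eventually hGO.bound
  obtain ⟨x, hx, hx0, hx1⟩ := (hupper.and (Ioo_mem_nhdsLT (zero_lt_one (α := ℝ)))).exists
  have hnorm : ‖tangentDisc p ν t x - p‖ = t * ‖ν‖ * (1 - x) := by
    rw [norm_tangentDisc_sub, abs_of_pos ht, ← ofReal_one, ← ofReal_sub, norm_real,
      Real.norm_of_nonneg (sub_nonneg.2 hx1.le)]
    ring
  have hle : c * (1 - x) ≤ L * (t * ‖ν‖) * (1 - x) :=
    calc c * (1 - x) ≤ ‖G (tangentDisc p ν t x) - p‖ := by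
          simpa [abs_of_pos hx0] using hlower x (by simpa [abs_of_pos hx0] using hx1)
      _ ≤ L * ‖tangentDisc p ν t x - p‖ := hx
      _ = L * (t * ‖ν‖) * (1 - x) := by rw [hnorm, ← mul_assoc]
  exact (le_of_mul_le_mul_right hle (sub_pos.2 hx1)).not_gt htc

theorem orbits_stay_near_boundary_point_general [InnerProductSpace ℂ E] [ProperSpace E]
    {Ω V : Set E} {ρ : E → ℝ} {p : E} (hΩ : Bornology.IsBounded Ω)
    (hρ : IsLocalDefiningFunction Ω ρ p) (hspc : IsStronglyPseudoconvexAt ρ p) (hV : V ∈ 𝓝 p) :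
    ∃ z ∈ V ∩ Ω, ∀ F : E → E, DifferentiableOn ℂ F Ω → MapsTo F Ω Ω →
      ((fun z => F z - z) =o[𝓝[Ω] p] fun z => z - p) → ∀ m : ℕ, F^[m] z ∈ V := by
  obtain ⟨u, hu⟩ := hρ.exists_isLocalPeakFunction hspc
  obtain ⟨ν, hν⟩ := hρ.exists_mapsTo_tangentDisc
  obtain ⟨z, hz, hstay⟩ := hu.exists_forall_mem_of_isBigOWith hΩ hν hV (1 + 1)
  refine ⟨z, hz, fun F hF hFΩ ho m => hstay _ (hF.iterate hFΩ m) (hFΩ.iterate m) ?_⟩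
  simpa using ((isLittleO_iterate_sub hFΩ ho m).def' one_pos).add
    (isBigOWith_refl (fun z => z - p) (𝓝[Ω] p))

end SelfMap

section EuclideanSpace

variable {n : ℕ} {Ω : Set (En n)} {ρ : En n → ℝ} {p : En n}

theorem IsDefiningFunction.notMem_of_mem_frontier {m : ℕ∞} (hρ : IsDefiningFunction Ω m ρ)
    (hp : p ∈ frontier Ω) : p ∉ Ω := by
  obtain ⟨-, hΩ, hfrontier, -⟩ := hρ
  have hρp : ρ p = 0 := by simpa [hfrontier] using hp
  simp [hΩ, hρp]

theorem IsDefiningFunction.isLocalDefiningFunction {m : ℕ∞} (hρ : IsDefiningFunction Ω m ρ)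
    (hm : 2 ≤ m) (hp : p ∈ frontier Ω) : IsLocalDefiningFunction Ω ρ p := by
  obtain ⟨hsmooth, hΩ, hfrontier, hregular⟩ := hρ
  exact ⟨(hsmooth.of_le (WithTop.coe_le_coe.2 hm)).contDiffAt, by simpa [hfrontier] using hp,
    hregular p hp, by simp [hΩ]⟩

theorem StronglyPcxAt.isStronglyPseudoconvexAt (h : StronglyPcxAt ρ p) :
    IsStronglyPseudoconvexAt ρ p := by
  intro ξ hξ h1 h2
  simpa [LeviForm, complexHessian, iteratedFDeriv_two_apply] using h ξ hξ ⟨h1, h2⟩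

theorem LittleOh.isLittleO {F : En n → En n} (ho : LittleOh Ω F p 1) (hp : p ∉ Ω) :
    (fun z => F z - z) =o[𝓝[Ω] p] fun z => z - p := by
  rw [← Asymptotics.isLittleO_norm_norm, Asymptotics.isLittleO_iff_tendsto']
  · simpa [LittleOh] using ho
  · filter_upwards [self_mem_nhdsWithin] with z hz h
    exact absurd (sub_eq_zero.1 (norm_eq_zero.1 h) ▸ hz) hp

end EuclideanSpace

theorem orbits_stay_near_boundary_point
    {n : ℕ} (hn : 2 ≤ n) (Ω : Set (En n)) (ρ : En n → ℝ)
    (hΩ : IsDomain' Ω) (hbd : Bornology.IsBounded Ω)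
    (hρ : IsPcxCinfBoundary Ω ρ)
    (p : En n) (hp : p ∈ frontier Ω) (hspc : StronglyPcxAt ρ p)
    (F : En n → En n) (hF : DifferentiableOn ℂ F Ω) (hFself : MapsTo F Ω Ω)
    (ho : LittleOh Ω F p 1) :
    ∀ V ∈ 𝓝 p, ∃ z ∈ V ∩ Ω, ∀ m : ℕ, 1 ≤ m → F^[m] z ∈ V := by
  intro V hV
  obtain ⟨z, hz, hstay⟩ := orbits_stay_near_boundary_point_general hbd
    (hρ.1.isLocalDefiningFunction le_top hp) hspc.isStronglyPseudoconvexAt hV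
  exact ⟨z, hz, fun m _ => hstay F hF hFself (ho.isLittleO (hρ.1.notMem_of_mem_frontier hp)) m⟩
end
end

section
/- Let Ω be a domain in ℂ^{n+1} (n ≥ 0) having p ∈ ∂Ω as a smooth boundary point (there is a C^∞ real-valued function ρ on a neighborhood W of p with dρ_p ≠ 0 and Ω ∩ W = {z ∈ W : ρ(z) < 0}), and let f : Ω → ℂ^m be holomorphic. For C > 0 set Γ_C = {z ∈ Ω : ‖z−p‖ ≤ C·dist(z, ℂ^{n+1}∖Ω)}. Suppose the non-tangential differential of f at p exists: there exist v ∈ ℂ^m and a ℂ-linear map L : ℂ^{n+1} → ℂ^m such that for every C > 0, ‖f(z) − v − L(z−p)‖/‖z−p‖ → 0 as z → p within Γ_C. Then for every C > 0 and every sequence (z_k) in Γ_C with z_k → p, the complex derivatives df_{z_k} converge to L in operator norm. -/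
open Complex Topology Filter Metric Set Function

noncomputable section

/-!
If `z` lies in the cone `Γ_C` and `d` is its distance to the complement of `Ω`, then for small `t`
the ball of radius `t * d` around `z` stays in a slightly wider cone, where the remainder
`g z = f z - v - L (z - p)` is `o(‖z - p‖)`. On that ball `‖w - p‖ ≤ (C + t) * d`, so `g` is `o(d)`
there, and the Cauchy estimate bounds `dg_z = df_z - L` by `o(d) / (t * d)`.
-/

section NontangentialCone

variable {E F : Type*} {Ω : Set E} {p : E} {C C' t : ℝ}

/-- The non-tangential approach region `Γ_C` at `p`, of aperture `C`. The encoding is only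
meaningful for `Ω ≠ univ`: if `Ωᶜ` is empty, `infDist` takes the junk value `0`. -/
def nontangentialCone [SeminormedAddCommGroup E] (Ω : Set E) (p : E) (C : ℝ) : Set E :=
  {z ∈ Ω | ‖z - p‖ ≤ C * infDist z Ωᶜ}

theorem norm_sub_le_of_mem_ball_of_mem_nontangentialCone [SeminormedAddCommGroup E] {z w : E}
    (hz : z ∈ nontangentialCone Ω p C) (hw : w ∈ ball z (t * infDist z Ωᶜ)) :
    ‖w - p‖ ≤ (C + t) * infDist z Ωᶜ :=
  calc ‖w - p‖ ≤ ‖w - z‖ + ‖z - p‖ := norm_sub_le_norm_sub_add_norm_sub w z p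
    _ ≤ t * infDist z Ωᶜ + C * infDist z Ωᶜ := add_le_add (mem_ball_iff_norm.1 hw).le hz.2
    _ = (C + t) * infDist z Ωᶜ := by ring

theorem ball_mul_infDist_compl_subset [PseudoMetricSpace E] (ht : t ≤ 1) (z : E) :
    ball z (t * infDist z Ωᶜ) ⊆ Ω :=
  (ball_subset_ball (mul_le_of_le_one_left infDist_nonneg ht)).trans ball_infDist_compl_subset

theorem ball_subset_nontangentialCone [SeminormedAddCommGroup E] {z : E} (hC' : 0 ≤ C')
    (ht : t ≤ 1) (htC : C + t ≤ C' * (1 - t)) (hz : z ∈ nontangentialCone Ω p C) :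
    ball z (t * infDist z Ωᶜ) ⊆ nontangentialCone Ω p C' := by
  intro w hw
  have infDist_le : (1 - t) * infDist z Ωᶜ ≤ infDist w Ωᶜ := by
    have := infDist_le_infDist_add_dist (s := Ωᶜ) (x := z) (y := w)
    linarith [mem_ball'.1 hw]
  refine ⟨ball_mul_infDist_compl_subset ht z hw, ?_⟩
  calc ‖w - p‖ ≤ (C + t) * infDist z Ωᶜ := norm_sub_le_of_mem_ball_of_mem_nontangentialCone hz hw
    _ ≤ C' * (1 - t) * infDist z Ωᶜ := mul_le_mul_of_nonneg_right htC infDist_nonneg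
    _ = C' * ((1 - t) * infDist z Ωᶜ) := mul_assoc _ _ _
    _ ≤ C' * infDist w Ωᶜ := mul_le_mul_of_nonneg_left infDist_le hC'

theorem tendsto_ball_mul_infDist_compl_smallSets [PseudoMetricSpace E] (hp : p ∉ Ω) (t : ℝ) :
    Tendsto (fun z => ball z (t * infDist z Ωᶜ)) (𝓝 p) (𝓝 p).smallSets := by
  have radius_tendsto : Tendsto (fun z => t * infDist z Ωᶜ + dist z p) (𝓝 p) (𝓝 0) := by
    have hcont : Continuous fun z => t * infDist z Ωᶜ + dist z p := by fun_prop
    simpa only [infDist_zero_of_mem (mem_compl hp), mul_zero, dist_self, add_zero]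
      using hcont.tendsto p
  exact ((tendsto_closedBall_smallSets p).comp radius_tendsto).smallSets_mono <| .of_forall fun z =>
    ball_subset_closedBall.trans (closedBall_subset_closedBall' le_rfl)

theorem tendsto_ball_nhdsWithin_nontangentialCone_smallSets [SeminormedAddCommGroup E] (hp : p ∉ Ω)
    (hC' : 0 ≤ C') (ht : t ≤ 1) (htC : C + t ≤ C' * (1 - t)) :
    Tendsto (fun z => ball z (t * infDist z Ωᶜ)) (𝓝[nontangentialCone Ω p C] p)
      (𝓝[nontangentialCone Ω p C'] p).smallSets := by
  rw [nhdsWithin, nhdsWithin, smallSets_inf, smallSets_principal]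
  exact (tendsto_ball_mul_infDist_compl_smallSets hp t).inf <|
    tendsto_principal_principal.2 fun _ => ball_subset_nontangentialCone hC' ht htC

theorem isLittleO_nontangentialCone_of_tendsto_div [NormedAddCommGroup E]
    [SeminormedAddCommGroup F] {g : E → F} (hp : p ∉ Ω)
    (hg : Tendsto (fun z => ‖g z‖ / ‖z - p‖) (𝓝[nontangentialCone Ω p C] p) (𝓝 0)) :
    g =o[𝓝[nontangentialCone Ω p C] p] fun z => z - p := by
  refine Asymptotics.isLittleO_norm_norm.1 ((Asymptotics.isLittleO_iff_tendsto' ?_).2 hg)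
  filter_upwards [self_mem_nhdsWithin] with z hz hzp
  exact absurd (sub_eq_zero.1 (norm_eq_zero.1 hzp) ▸ hz.1) hp

variable [NormedAddCommGroup E] [NormedSpace ℂ E] [NormedAddCommGroup F] [NormedSpace ℂ F]

theorem norm_fderiv_le_of_forall_mem_ball_norm_le {g : E → F} {z : E} {r M : ℝ} (hr : 0 < r)
    (hg : DifferentiableOn ℂ g (ball z r)) (hM : ∀ w ∈ ball z r, ‖g w‖ ≤ M) :
    ‖fderiv ℂ g z‖ ≤ 2 * M / r := by
  refine norm_fderiv_le_div_of_mapsTo_ball hg (fun w hw => ?_) hr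
  rw [mem_closedBall_iff_norm, two_mul]
  exact norm_sub_le_of_le (hM w hw) (hM z (mem_ball_self hr))

theorem norm_fderiv_le_of_mem_nontangentialCone {g : E → F} {z : E} {c : ℝ} (hΩ : IsOpen Ω)
    (hp : p ∉ Ω) (hg : DifferentiableOn ℂ g Ω) (hz : z ∈ nontangentialCone Ω p C)
    (ht₀ : 0 < t) (ht₁ : t ≤ 1) (hc : 0 ≤ c)
    (hbound : ∀ w ∈ ball z (t * infDist z Ωᶜ), ‖g w‖ ≤ c * ‖w - p‖) :
    ‖fderiv ℂ g z‖ ≤ 2 * (C + t) / t * c := by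
  have infDist_pos : 0 < infDist z Ωᶜ :=
    (hΩ.isClosed_compl.notMem_iff_infDist_pos ⟨p, hp⟩).1 (notMem_compl_iff.2 hz.1)
  have norm_le : ∀ w ∈ ball z (t * infDist z Ωᶜ), ‖g w‖ ≤ c * ((C + t) * infDist z Ωᶜ) :=
    fun w hw => (hbound w hw).trans <|
      mul_le_mul_of_nonneg_left (norm_sub_le_of_mem_ball_of_mem_nontangentialCone hz hw) hc
  calc ‖fderiv ℂ g z‖ ≤ 2 * (c * ((C + t) * infDist z Ωᶜ)) / (t * infDist z Ωᶜ) :=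
        norm_fderiv_le_of_forall_mem_ball_norm_le (mul_pos ht₀ infDist_pos)
          (hg.mono (ball_mul_infDist_compl_subset ht₁ z)) norm_le
    _ = 2 * (C + t) / t * c := by field_simp

theorem tendsto_fderiv_zero_of_isLittleO_nontangentialCone {g : E → F} (hΩ : IsOpen Ω)
    (hp : p ∉ Ω) (hg : DifferentiableOn ℂ g Ω) (hC : 0 ≤ C) (hCC' : C < C')
    (hgo : g =o[𝓝[nontangentialCone Ω p C'] p] fun z => z - p) :
    Tendsto (fderiv ℂ g) (𝓝[nontangentialCone Ω p C] p) (𝓝 0) := by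
  -- `t` solves `C + t = C' * (1 - t)`.
  obtain ⟨t, ht₀, ht₁, htC⟩ : ∃ t : ℝ, 0 < t ∧ t ≤ 1 ∧ C + t ≤ C' * (1 - t) := by
    have hC' : 0 < 1 + C' := by linarith
    refine ⟨(C' - C) / (1 + C'), div_pos (sub_pos.2 hCC') hC', (div_le_one hC').2 (by linarith),
      le_of_eq ?_⟩
    field_simp
    ring
  rw [Metric.tendsto_nhds]
  intro ε hε
  obtain ⟨c, hc, hcε⟩ := exists_pos_mul_lt hε (2 * (C + t) / t)
  have bound_on_balls : ∀ᶠ z in 𝓝[nontangentialCone Ω p C] p,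
      ∀ w ∈ ball z (t * infDist z Ωᶜ), ‖g w‖ ≤ c * ‖w - p‖ :=
    (tendsto_ball_nhdsWithin_nontangentialCone_smallSets hp (hC.trans hCC'.le) ht₁ htC).eventually
      (hgo.def hc).smallSets
  filter_upwards [bound_on_balls, self_mem_nhdsWithin] with z hbound hz
  rw [dist_zero_right]
  exact (norm_fderiv_le_of_mem_nontangentialCone hΩ hp hg hz ht₀ ht₁ hc.le hbound).trans_lt hcε

theorem nontangential_derivative_convergence_general (hΩ : IsOpen Ω) (hp : p ∉ Ω) {f : E → F}
    (hf : DifferentiableOn ℂ f Ω) (v : F) (L : E →L[ℂ] F) (hC : 0 ≤ C) (hCC' : C < C')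
    (hnt : Tendsto (fun z => ‖f z - v - L (z - p)‖ / ‖z - p‖)
      (𝓝[nontangentialCone Ω p C'] p) (𝓝 0)) :
    Tendsto (fderiv ℂ f) (𝓝[nontangentialCone Ω p C] p) (𝓝 L) := by
  have hasFDerivAt_remainder : ∀ z ∈ Ω,
      HasFDerivAt (fun w => f w - v - L (w - p)) (fderiv ℂ f z - L) z := fun z hz =>
    ((hf.differentiableAt (hΩ.mem_nhds hz)).hasFDerivAt.sub_const v).sub
      (L.hasFDerivAt.comp z ((hasFDerivAt_id z).sub_const p))
  have fderiv_remainder_tendsto := tendsto_fderiv_zero_of_isLittleO_nontangentialCone hΩ hp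
    (fun z hz => (hasFDerivAt_remainder z hz).differentiableAt.differentiableWithinAt) hC hCC'
    (isLittleO_nontangentialCone_of_tendsto_div hp hnt)
  refine tendsto_sub_nhds_zero_iff.1 (fderiv_remainder_tendsto.congr' ?_)
  filter_upwards [self_mem_nhdsWithin] with z hz
  exact (hasFDerivAt_remainder z hz.1).fderiv

end NontangentialCone

theorem nontangential_derivative_convergence
    {n m : ℕ} (Ω : Set (En (n + 1)))
    (hΩ : IsDomain' Ω) (p : En (n + 1)) (hp : p ∈ frontier Ω)
    (hsmooth : ∃ W ∈ 𝓝 p, ∃ ρ : En (n + 1) → ℝ, IsOpen W ∧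
      ContDiffOn ℝ (⊤ : ℕ∞) ρ W ∧ fderiv ℝ ρ p ≠ 0 ∧
      Ω ∩ W = {z ∈ W | ρ z < 0})
    (f : En (n + 1) → En m) (hf : DifferentiableOn ℂ f Ω)
    (v : En m) (L : En (n + 1) →L[ℂ] En m)
    (hnt : ∀ C : ℝ, 0 < C →
      Tendsto (fun z => ‖f z - v - L (z - p)‖ / ‖z - p‖)
        (𝓝[{z ∈ Ω | ‖z - p‖ ≤ C * Metric.infDist z Ωᶜ}] p) (𝓝 0)) :
    ∀ C : ℝ, 0 < C → ∀ zk : ℕ → En (n + 1),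
      (∀ k, zk k ∈ {z ∈ Ω | ‖z - p‖ ≤ C * Metric.infDist z Ωᶜ}) →
      Tendsto zk atTop (𝓝 p) →
      Tendsto (fun k => fderiv ℂ f (zk k)) atTop (𝓝 L) := by
  intro C hC zk hzk hlim
  have hpΩ : p ∉ Ω := (hΩ.1.frontier_eq ▸ hp).2
  exact (nontangential_derivative_convergence_general hΩ.1 hpΩ hf v L hC.le (lt_add_one C)
    (hnt (C + 1) (add_pos hC one_pos))).comp (tendsto_nhdsWithin_iff.2 ⟨hlim, .of_forall hzk⟩)
end
end

section
/- Let Ω ⊂ ℂⁿ be a bounded pseudoconvex domain with C^∞ boundary and let F : Ω → Ω be holomorphic. Suppose the sequence of iterates {F^m} is not compactly divergent, i.e., some subsequence F^{m_j} converges uniformly on compact subsets of Ω to a map h₀ with h₀(Ω) ⊆ Ω. Then there exists a holomorphic retraction r : Ω → Ω (r ∘ r = r) which is the limit, uniformly on compact subsets, of some subsequence of {F^m}; moreover, F maps M := r(Ω) bijectively onto M, and every map h which is a limit, uniformly on compact subsets, of a subsequence of {F^m} satisfies h = h ∘ r and restricts to a bijection of M onto M. -/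
open Complex Topology Filter Metric Set Function

noncomputable section

/-!
By the Schwarz lemma the iterates of `F` are equicontinuous. For a self-map of a locally compact
space with equicontinuous iterates, an orbit with an accumulation point is relatively compact
(Całka's theorem), so `{F ^ m}` is relatively compact in the composition monoid of continuous
self-maps of `Ω`. The limits of powers in such a monoid form a group: its identity is the
retraction `r`, and on `r(Ω)` every limit, as well as `F` itself, is inverted by another limit.
Limits of iterates are holomorphic by Weierstrass' theorem.
-/

section Orbits

variable {X : Type*} [PseudoMetricSpace X] {f : X → X} {ε δ : ℝ} {x y z w : X}

/-- The orbits of `x` and `y` under `f` stay within distance `ε` of each other at all times: the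
`ε`-balls of a metric for which `f` is nonexpansive. -/
def OrbitClose (f : X → X) (ε : ℝ) (x y : X) : Prop :=
  ∀ k : ℕ, dist (f^[k] x) (f^[k] y) ≤ ε

theorem OrbitClose.dist_le (h : OrbitClose f ε x y) : dist x y ≤ ε :=
  h 0

theorem OrbitClose.refl (hε : 0 ≤ ε) (x : X) : OrbitClose f ε x x := fun k => by
  rwa [dist_self]

theorem OrbitClose.symm (h : OrbitClose f ε x y) : OrbitClose f ε y x := fun k => by
  rw [dist_comm]
  exact h k

theorem OrbitClose.trans (h₁ : OrbitClose f ε x y) (h₂ : OrbitClose f δ y z) :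
    OrbitClose f (ε + δ) x z := fun k =>
  (dist_triangle _ (f^[k] y) _).trans (add_le_add (h₁ k) (h₂ k))

theorem OrbitClose.trans_half (h₁ : OrbitClose f (ε / 2) x y) (h₂ : OrbitClose f (ε / 2) y z) :
    OrbitClose f ε x z :=
  add_halves ε ▸ h₁.trans h₂

theorem OrbitClose.iterate (h : OrbitClose f ε x y) (m : ℕ) :
    OrbitClose f ε (f^[m] x) (f^[m] y) := fun k => by
  simpa only [← iterate_add_apply] using h (k + m)

theorem eventually_orbitClose (hf : Equicontinuous fun k => f^[k]) (x : X) (hε : 0 < ε) :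
    ∀ᶠ y in 𝓝 x, OrbitClose f ε x y := by
  filter_upwards [Metric.equicontinuousAt_iff_right.1 (hf x) ε hε] with y hy k
  exact (hy k).le

theorem frequently_orbitClose (hf : Equicontinuous fun k => f^[k])
    (h : MapClusterPt w atTop fun k => f^[k] z) (hε : 0 < ε) :
    ∃ᶠ k in atTop, OrbitClose f ε w (f^[k] z) :=
  h.frequently (eventually_orbitClose hf w hε)

theorem mapClusterPt_iterate_self (hf : Equicontinuous fun k => f^[k])
    (h : MapClusterPt w atTop fun k => f^[k] z) : MapClusterPt w atTop fun k => f^[k] w := by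
  refine nhds_basis_closedBall.mapClusterPt_iff_frequently.2 fun ε hε => ?_
  have hfreq := frequently_orbitClose hf h (half_pos hε)
  obtain ⟨i, hi⟩ := hfreq.exists
  refine frequently_atTop.2 fun N => ?_
  obtain ⟨j, hNj, hj⟩ := frequently_atTop.1 hfreq (N + i)
  obtain ⟨p, rfl⟩ := Nat.exists_eq_add_of_le' (le_of_add_le_right hNj)
  rw [iterate_add_apply] at hj
  exact ⟨p, le_of_add_le_add_right hNj,
    mem_closedBall'.2 (hj.trans_half (hi.iterate p).symm).dist_le⟩

theorem orbitClose_of_iterate_of_mapClusterPt (hf : Equicontinuous fun k => f^[k])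
    (hw : MapClusterPt w atTop fun k => f^[k] w) {a b m : ℕ}
    (h : OrbitClose f ε (f^[m + a] w) (f^[m + b] w)) : OrbitClose f ε (f^[a] w) (f^[b] w) := by
  have hreturn (η : ℝ) (hη : 0 < η) : ∃ q, OrbitClose f η w (f^[q + m] w) := by
    obtain ⟨p, hmp, hp⟩ := frequently_atTop.1 (frequently_orbitClose hf hw hη) m
    exact ⟨p - m, by rwa [Nat.sub_add_cancel hmp]⟩
  refine fun k => le_of_forall_pos_le_add fun η hη => ?_
  -- Up to `η / 2`, the iterate `f^[q]` undoes `f^[m]` on the whole orbit of `w`.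
  obtain ⟨q, hq⟩ := hreturn (η / 2) (half_pos hη)
  have hshift (c : ℕ) : OrbitClose f (η / 2) (f^[c] w) (f^[q] (f^[m + c] w)) := by
    simpa only [← iterate_add_apply, ← add_assoc, add_comm c] using hq.iterate c
  have := (((hshift a).trans (h.iterate q)).trans (hshift b).symm) k
  linarith

theorem exists_le_orbitClose_of_mem_isCompact (hf : Equicontinuous fun k => f^[k]) {K : Set X}
    (hK : IsCompact K) (hε : 0 < ε) (w : X) :
    ∃ N, ∀ k, f^[k] w ∈ K → ∃ i ≤ N, OrbitClose f ε (f^[k] w) (f^[i] w) := by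
  refine hK.induction_on
    (p := fun s => ∃ N, ∀ k, f^[k] w ∈ s → ∃ i ≤ N, OrbitClose f ε (f^[k] w) (f^[i] w))
    (by simp) ?_ ?_ fun x _ => ?_
  · exact fun s t hst ht => ht.imp fun N hN k hk => hN k (hst hk)
  · rintro s t ⟨N, hN⟩ ⟨N', hN'⟩
    refine ⟨max N N', fun k hk => ?_⟩
    rcases hk with hk | hk
    · exact (hN k hk).imp fun i hi => hi.imp_left le_max_of_le_left
    · exact (hN' k hk).imp fun i hi => hi.imp_left le_max_of_le_right
  · refine ⟨_, mem_nhdsWithin_of_mem_nhds (eventually_orbitClose hf x (half_pos hε)), ?_⟩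
    by_cases hvisit : ∃ i, OrbitClose f (ε / 2) x (f^[i] w)
    · obtain ⟨i, hi⟩ := hvisit
      exact ⟨i, fun k hk => ⟨i, le_rfl, OrbitClose.trans_half (OrbitClose.symm hk) hi⟩⟩
    · exact ⟨0, fun k hk => (hvisit ⟨k, hk⟩).elim⟩

theorem exists_bounded_gaps_orbitClose (hf : Equicontinuous fun k => f^[k])
    (hε : 0 < ε) (hball : IsCompact (closedBall w ε))
    (hw : MapClusterPt w atTop fun k => f^[k] w) :
    ∃ p, ∀ n, ∃ k ≤ n, n < k + p ∧ OrbitClose f ε w (f^[k] w) := by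
  obtain ⟨N, hN⟩ := exists_le_orbitClose_of_mem_isCompact hf hball (half_pos hε) w
  obtain ⟨p, hNp, hp⟩ := frequently_atTop.1 (frequently_orbitClose hf hw (half_pos hε)) (N + 1)
  -- The return at time `k` is close to an earlier one at time `i ≤ N`, so `k + p` is close to
  -- `i + p`, hence to `i`; recurrence allows dividing out `f^[i]`.
  have hnext (k : ℕ) (hk : OrbitClose f ε w (f^[k] w)) :
      ∃ k', k < k' ∧ k' ≤ k + p ∧ OrbitClose f ε w (f^[k'] w) := by
    obtain ⟨i, hiN, hi⟩ := hN k (mem_closedBall'.2 hk.dist_le)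
    refine ⟨k + (p - i), by omega, by omega, ?_⟩
    refine orbitClose_of_iterate_of_mapClusterPt hf hw (a := 0) (m := i) ?_
    have h := (hp.iterate i).trans_half (by
      simpa only [← iterate_add_apply, add_comm p] using hi.symm.iterate p)
    rwa [show k + p = i + (k + (p - i)) by omega] at h
  refine ⟨p, fun n => ?_⟩
  induction n with
  | zero => exact ⟨0, le_rfl, by omega, .refl hε.le w⟩
  | succ n ih =>
    obtain ⟨k, hkn, hnk, hk⟩ := ih
    rcases Nat.lt_or_ge (n + 1) (k + p) with hlt | hge
    · exact ⟨k, by omega, hlt, hk⟩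
    · obtain ⟨k', hkk', hk'p, hk'⟩ := hnext k hk
      exact ⟨k', by omega, by omega, hk'⟩

variable [LocallyCompactSpace X]

theorem isCompact_closure_orbit_of_mapClusterPt_self (hf : Equicontinuous fun k => f^[k])
    (hw : MapClusterPt w atTop fun k => f^[k] w) :
    IsCompact (closure (range fun k => f^[k] w)) := by
  obtain ⟨ε, hε, hball⟩ := (isCompact_singleton (x := w)).exists_isCompact_cthickening
  rw [cthickening_singleton w hε.le] at hball
  obtain ⟨p, hp⟩ := exists_bounded_gaps_orbitClose hf hε hball hw
  have hK : IsCompact (⋃ l ∈ Finset.range p, f^[l] '' closedBall w ε) :=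
    (Finset.range p).isCompact_biUnion fun l _ => hball.image (hf.continuous l)
  refine hK.closure_of_subset (range_subset_iff.2 fun n => ?_)
  obtain ⟨k, hkn, hnk, hk⟩ := hp n
  refine mem_iUnion₂.2 ⟨n - k, Finset.mem_range.2 (by omega), f^[k] w,
    mem_closedBall'.2 hk.dist_le, ?_⟩
  rw [← iterate_add_apply, Nat.sub_add_cancel hkn]

theorem isCompact_closure_orbit_of_mapClusterPt (hf : Equicontinuous fun k => f^[k])
    (h : MapClusterPt w atTop fun k => f^[k] z) :
    IsCompact (closure (range fun k => f^[k] z)) := by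
  obtain ⟨δ, hδ, hK⟩ := (isCompact_closure_orbit_of_mapClusterPt_self hf
    (mapClusterPt_iterate_self hf h)).exists_isCompact_cthickening
  obtain ⟨m, hm⟩ := (frequently_orbitClose hf h hδ).exists
  refine (hK.union ((finite_Iio m).image fun k => f^[k] z).isCompact).closure_of_subset
    (range_subset_iff.2 fun k => ?_)
  rcases Nat.lt_or_ge k m with hkm | hmk
  · exact Or.inr ⟨k, hkm, rfl⟩
  · obtain ⟨l, rfl⟩ := Nat.exists_eq_add_of_le' hmk
    refine Or.inl (mem_cthickening_of_dist_le _ (f^[l] w) _ _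
      (subset_closure (mem_range_self l)) ?_)
    simpa only [iterate_add_apply] using (hm.symm.iterate l).dist_le

end Orbits

section PowerLimits

variable {M : Type*} [Monoid M] [TopologicalSpace M] {a x y : M}

/-- The limits of the powers of `a`, encoded as the cluster points of `n ↦ a ^ n` at infinity, so
that no countability assumption on `M` is needed. -/
def limitPowers (a : M) : Set M :=
  {x | MapClusterPt x atTop fun n : ℕ => a ^ n}

theorem isCompact_limitPowers (ha : IsCompact (closure (range fun n : ℕ => a ^ n))) :
    IsCompact (limitPowers a) :=
  ha.of_isClosed_subset isClosed_setOfPred_clusterPt fun _ hx =>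
    isClosed_closure.mem_of_mapClusterPt hx
      (.of_forall fun n => subset_closure (mem_range_self n))

theorem nonempty_limitPowers (ha : IsCompact (closure (range fun n : ℕ => a ^ n))) :
    (limitPowers a).Nonempty := by
  obtain ⟨x, -, hx⟩ := ha.exists_mapClusterPt (f := atTop) (u := fun n : ℕ => a ^ n)
    (le_principal_iff.2 (mem_map.2 (univ_mem' fun n => subset_closure (mem_range_self n))))
  exact ⟨x, hx⟩

variable [T2Space M] [ContinuousMul M]

theorem commute_of_mem_limitPowers (hx : x ∈ limitPowers a) (h : Commute a y) : Commute x y :=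
  (isClosed_eq (continuous_mul_const y) (continuous_const_mul y)).mem_of_mapClusterPt hx
    (.of_forall fun n => h.pow_left n)

theorem commute_self_of_mem_limitPowers (hx : x ∈ limitPowers a) : Commute x a :=
  commute_of_mem_limitPowers hx (Commute.refl a)

theorem commute_of_mem_limitPowers_of_mem_limitPowers (hx : x ∈ limitPowers a)
    (hy : y ∈ limitPowers a) : Commute x y :=
  commute_of_mem_limitPowers hx (commute_self_of_mem_limitPowers hy).symm

theorem exists_mem_limitPowers_mul_pow_eq (ha : IsCompact (closure (range fun n : ℕ => a ^ n)))
    (hy : y ∈ limitPowers a) (k : ℕ) : ∃ z ∈ limitPowers a, z * a ^ k = y := by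
  have hshift : MapClusterPt y atTop ((fun n : ℕ => a ^ n) ∘ (· + k)) := by
    rw [mapClusterPt_comp, map_add_atTop_eq_nat]
    exact hy
  obtain ⟨U, hU, hUy⟩ := mapClusterPt_iff_ultrafilter.1 hshift
  obtain ⟨z, -, hz⟩ := ha.ultrafilter_le_nhds' (U.map fun n => a ^ n)
    (Ultrafilter.mem_map.2 (univ_mem' fun n => subset_closure (mem_range_self n)))
  refine ⟨z, mapClusterPt_iff_ultrafilter.2 ⟨U, hU, hz⟩, ?_⟩
  refine tendsto_nhds_unique (Tendsto.mul_const (a ^ k) hz) ?_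
  simpa only [comp_def, pow_add] using hUy

theorem exists_mem_limitPowers_mul_eq (ha : IsCompact (closure (range fun n : ℕ => a ^ n)))
    (hx : x ∈ limitPowers a) (hy : y ∈ limitPowers a) : ∃ z ∈ limitPowers a, z * x = y := by
  choose z hz hzy using exists_mem_limitPowers_mul_pow_eq ha hy
  obtain ⟨U, -, hUx⟩ := mapClusterPt_iff_ultrafilter.1 hx
  obtain ⟨z₀, hz₀, hUz⟩ := (isCompact_limitPowers ha).ultrafilter_le_nhds' (U.map z)
    (Ultrafilter.mem_map.2 (univ_mem' hz))
  refine ⟨z₀, hz₀, tendsto_nhds_unique (Tendsto.mul hUz hUx) ?_⟩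
  simpa only [hzy] using tendsto_const_nhds

theorem exists_mem_limitPowers_forall_mul_eq
    (ha : IsCompact (closure (range fun n : ℕ => a ^ n))) :
    ∃ e ∈ limitPowers a, ∀ y ∈ limitPowers a, y * e = y := by
  obtain ⟨x, hx⟩ := nonempty_limitPowers ha
  obtain ⟨e, he, hex⟩ := exists_mem_limitPowers_mul_eq ha hx hx
  refine ⟨e, he, fun y hy => ?_⟩
  obtain ⟨z, -, rfl⟩ := exists_mem_limitPowers_mul_eq ha hx hy
  rw [mul_assoc, (commute_of_mem_limitPowers_of_mem_limitPowers hx he).eq, hex]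

end PowerLimits

theorem bijOn_range_of_comp_eq {X : Type*} {r b g : X → X} (hr : r ∘ r = r) (hgb : g ∘ b = r)
    (hbg : b ∘ g = r) : BijOn b (range r) (range r) := by
  have hr_range : ∀ x ∈ range r, r x = x := forall_mem_range.2 (congrFun hr)
  have hb : b ∘ r = r ∘ b := by rw [← hgb, ← comp_assoc, hbg, hgb]
  have hg : g ∘ r = r ∘ g := by rw [← hbg, ← comp_assoc, hgb, hbg]
  refine InvOn.bijOn ⟨fun x hx => ?_, fun x hx => ?_⟩
    (mapsTo_range_iff.2 fun x => ⟨b x, (congrFun hb x).symm⟩)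
    (mapsTo_range_iff.2 fun x => ⟨g x, (congrFun hg x).symm⟩)
  · exact (congrFun hgb x).trans (hr_range x hx)
  · exact (congrFun hbg x).trans (hr_range x hx)

section Composition

variable {X : Type*} [TopologicalSpace X]

/-- The monoid of continuous self-maps under composition. It is only a local instance, because
Mathlib multiplies the elements of `C(X, X)` pointwise when `X` is itself a monoid. -/
abbrev compositionMonoid (X : Type*) [TopologicalSpace X] : Monoid C(X, X) where
  mul f g := f.comp g
  one := .id X
  mul_assoc _ _ _ := rfl
  one_mul _ := rfl
  mul_one _ := rfl

attribute [local instance] compositionMonoid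

theorem compositionMonoid_continuousMul [LocallyCompactSpace X] : ContinuousMul C(X, X) :=
  ⟨ContinuousMap.continuous_comp'.comp continuous_swap⟩

attribute [local instance] compositionMonoid_continuousMul

theorem coe_pow_eq_iterate (f : C(X, X)) (k : ℕ) : ⇑(f ^ k) = f^[k] := by
  induction k with
  | zero => rfl
  | succ k ih => rw [pow_succ, iterate_succ, ← ih]; rfl

theorem semiconj_pow_iterate {Y : Type*} {i : X → Y} {f : C(X, X)} {F : Y → Y}
    (h : Semiconj i f F) (k : ℕ) : Semiconj i ⇑(f ^ k) F^[k] := by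
  rw [coe_pow_eq_iterate]
  exact h.iterate_right k

theorem isCompact_closure_range_pow {X : Type*} [MetricSpace X] [LocallyCompactSpace X]
    {f : C(X, X)} (hf : Equicontinuous fun k => f^[k])
    (horb : ∀ z, ∃ w, MapClusterPt w atTop fun k => f^[k] z) :
    IsCompact (closure (range fun k : ℕ => f ^ k)) := by
  have hclosed : IsClosed (range (ContinuousMap.toUniformOnFunIsCompact (α := X) (β := X))) := by
    rw [ContinuousMap.range_toUniformOnFunIsCompact]
    exact UniformOnFun.isClosed_setOfPred_continuous CompactlyCoherentSpace.isCoherentWith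
  have hequi : Equicontinuous
      ((↑) ∘ Subtype.val : range (fun k : ℕ => f ^ k) → X → X) := fun x U hU => by
    filter_upwards [hf x U hU] with y hy
    rintro ⟨_, k, rfl⟩
    simpa only [comp_apply, coe_pow_eq_iterate] using hy k
  refine ArzelaAscoli.isCompact_closure_of_isClosedEmbedding (𝔖 := {K : Set X | IsCompact K})
    (fun _ hK => hK)
    ⟨ContinuousMap.isUniformEmbedding_toUniformOnFunIsCompact.isEmbedding, hclosed⟩
    (fun K _ => hequi.equicontinuousOn K) fun _ _ z _ => ?_
  obtain ⟨w, hw⟩ := horb z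
  refine ⟨_, isCompact_closure_orbit_of_mapClusterPt hf hw, forall_mem_range.2 fun k => ?_⟩
  exact subset_closure ⟨k, (congrFun (coe_pow_eq_iterate f k) z).symm⟩

theorem exists_retraction_mem_limitPowers [T2Space X] [LocallyCompactSpace X] {f : C(X, X)}
    (hf : IsCompact (closure (range fun k : ℕ => f ^ k))) :
    ∃ r ∈ limitPowers f, r.comp r = r ∧ BijOn f (range r) (range r) ∧
      ∀ h ∈ limitPowers f, h.comp r = h ∧ BijOn h (range r) (range r) := by
  obtain ⟨r, hr, hmul⟩ := exists_mem_limitPowers_forall_mul_eq hf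
  have hbij {b g : C(X, X)} (hgb : g * b = r) (hcomm : Commute g b) :
      BijOn b (range r) (range r) :=
    bijOn_range_of_comp_eq (g := g) (congrArg DFunLike.coe (hmul r hr))
      (congrArg DFunLike.coe hgb) (congrArg DFunLike.coe (hcomm.eq.symm.trans hgb))
  refine ⟨r, hr, hmul r hr, ?_, fun h hh => ⟨hmul h hh, ?_⟩⟩
  · obtain ⟨g, hg, hgf⟩ := exists_mem_limitPowers_mul_pow_eq hf hr 1
    rw [pow_one] at hgf
    exact hbij hgf (commute_self_of_mem_limitPowers hg)
  · obtain ⟨g, hg, hgh⟩ := exists_mem_limitPowers_mul_eq hf hh hr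
    exact hbij hgh (commute_of_mem_limitPowers_of_mem_limitPowers hg hh)

end Composition

section IterateLimits

variable {E : Type*} [UniformSpace E] {F h : E → E} {Ω : Set E} {f g : C(Ω, Ω)}

/-- `h` is the limit, uniformly on compact subsets of `Ω`, of a subsequence of the iterates of
`F`. -/
def IsIterateLimit (F : E → E) (Ω : Set E) (h : E → E) : Prop :=
  ∃ ms : ℕ → ℕ, StrictMono ms ∧ ∀ K ⊆ Ω, IsCompact K →
    TendstoUniformlyOn (fun j => F^[ms j]) h atTop K

attribute [local instance] compositionMonoid

theorem IsIterateLimit.exists_tendsto (hh : IsIterateLimit F Ω h) :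
    ∃ ms : ℕ → ℕ, StrictMono ms ∧ ∀ z ∈ Ω, Tendsto (fun j => F^[ms j] z) atTop (𝓝 (h z)) := by
  obtain ⟨ms, hms, hlim⟩ := hh
  exact ⟨ms, hms, fun z hz =>
    (hlim {z} (singleton_subset_iff.2 hz) isCompact_singleton).tendsto_at rfl⟩

theorem IsIterateLimit.mapClusterPt_iterate (hfF : Semiconj (Subtype.val : Ω → E) f F)
    (hh : IsIterateLimit F Ω h) {z : Ω} (hz : h z ∈ Ω) :
    MapClusterPt ⟨h z, hz⟩ atTop fun k => f^[k] z := by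
  obtain ⟨ms, hms, hlim⟩ := hh.exists_tendsto
  refine MapClusterPt.of_comp hms.tendsto_atTop (Tendsto.mapClusterPt (tendsto_subtype_rng.2 ?_))
  exact (hlim z z.2).congr fun j => (hfF.iterate_right (ms j) z).symm

theorem IsIterateLimit.exists_mem_limitPowers [T2Space E]
    (hf : IsCompact (closure (range fun k : ℕ => f ^ k)))
    (hfF : Semiconj (Subtype.val : Ω → E) f F) (hh : IsIterateLimit F Ω h) :
    ∃ g ∈ limitPowers f, Semiconj (Subtype.val : Ω → E) g h := by
  obtain ⟨ms, hms, hlim⟩ := hh.exists_tendsto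
  let U := Ultrafilter.of (atTop : Filter ℕ)
  obtain ⟨g, -, hg : Tendsto (fun j => f ^ ms j) U (𝓝 g)⟩ := hf.ultrafilter_le_nhds'
    (U.map fun j => f ^ ms j)
    (Ultrafilter.mem_map.2 (univ_mem' fun j => subset_closure (mem_range_self (ms j))))
  have hU : (U : Filter ℕ) ≤ atTop := Ultrafilter.of_le atTop
  refine ⟨g, MapClusterPt.of_comp (hms.tendsto_atTop.mono_left hU) hg.mapClusterPt, fun z => ?_⟩
  have hgz : Tendsto (fun j => ((f ^ ms j) z : E)) U (𝓝 (g z)) :=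
    (continuous_subtype_val.comp (continuous_eval_const z)).continuousAt.tendsto.comp hg
  simp only [(semiconj_pow_iterate hfF _).eq] at hgz
  exact tendsto_nhds_unique hgz ((hlim z z.2).mono_left hU)

theorem isIterateLimit_of_mem_limitPowers [LocallyCompactSpace Ω] [SigmaCompactSpace Ω]
    [(uniformity E).IsCountablyGenerated]
    (hfF : Semiconj (Subtype.val : Ω → E) f F) (hg : g ∈ limitPowers f)
    (hgh : Semiconj (Subtype.val : Ω → E) g h) : IsIterateLimit F Ω h := by
  obtain ⟨ms, hms, hlim⟩ := MapClusterPt.tendsto_subseq hg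
  refine ⟨ms, hms, fun K hKΩ hK => ?_⟩
  have hK' : IsCompact ((↑) ⁻¹' K : Set Ω) := Topology.IsInducing.subtypeVal.isCompact_preimage_iff
    (by rwa [Subtype.range_coe]) |>.2 hK
  have huniv := ContinuousMap.tendsto_iff_forall_isCompact_tendstoUniformlyOn.1 hlim _ hK'
  intro V hV
  filter_upwards [huniv _ (preimage_mem_comap hV)] with j hj z hz
  simpa only [comp_apply, mem_preimage, (semiconj_pow_iterate hfF _).eq, hgh.eq]
    using hj ⟨z, hKΩ hz⟩ hz

end IterateLimits

theorem bijOn_image_range_of_semiconj {X Y : Type*} {i : X → Y} {g s : X → X} {h r : Y → Y}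
    (hi : Injective i) (hgh : Semiconj i g h) (hsr : Semiconj i s r)
    (hg : BijOn g (range s) (range s)) : BijOn h (r '' range i) (r '' range i) := by
  rw [← range_comp, ← hsr.comp_eq, range_comp]
  refine bijOn_image_image hgh hg (InjOn.image_of_comp ?_)
  rw [← hgh.comp_eq]
  exact hi.comp_injOn hg.injOn

theorem exists_retraction_isIterateLimit {E : Type*} [MetricSpace E] {F h₀ : E → E} {Ω : Set E}
    [LocallyCompactSpace Ω] [SigmaCompactSpace Ω] {f : C(Ω, Ω)}
    (hfF : Semiconj (Subtype.val : Ω → E) f F) (hf : Equicontinuous fun k => f^[k])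
    (hh₀ : IsIterateLimit F Ω h₀) (hmaps : MapsTo h₀ Ω Ω) :
    ∃ r, IsIterateLimit F Ω r ∧ MapsTo r Ω Ω ∧ (∀ z ∈ Ω, r (r z) = r z) ∧
      BijOn F (r '' Ω) (r '' Ω) ∧ ∀ h, IsIterateLimit F Ω h →
        (∀ z ∈ Ω, h z = h (r z)) ∧ BijOn h (r '' Ω) (r '' Ω) := by
  have hcompact := isCompact_closure_range_pow hf fun z =>
    ⟨_, hh₀.mapClusterPt_iterate hfF (hmaps z.2)⟩
  obtain ⟨s, hs, hss, hfs, hlim⟩ := exists_retraction_mem_limitPowers hcompact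
  let r : E → E := extend Subtype.val (Subtype.val ∘ s) id
  have hsr : Semiconj (Subtype.val : Ω → E) s r := fun z =>
    (Subtype.val_injective.extend_apply (Subtype.val ∘ s) id z).symm
  have hbij {g : C(Ω, Ω)} {h : E → E} (hgh : Semiconj (Subtype.val : Ω → E) g h)
      (hg : BijOn g (range s) (range s)) : BijOn h (r '' Ω) (r '' Ω) := by
    simpa only [Subtype.range_coe] using
      bijOn_image_range_of_semiconj Subtype.val_injective hgh hsr hg
  refine ⟨r, isIterateLimit_of_mem_limitPowers hfF hs hsr, fun z hz => ?_, fun z hz => ?_,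
    hbij hfF hfs, fun h hh => ?_⟩
  · exact hsr ⟨z, hz⟩ ▸ (s ⟨z, hz⟩).2
  · lift z to Ω using hz
    simpa only [← hsr.eq, ContinuousMap.comp_apply] using
      congrArg Subtype.val (DFunLike.congr_fun hss z)
  · obtain ⟨g, hg, hgh⟩ := hh.exists_mem_limitPowers hcompact hfF
    obtain ⟨hgs, hgbij⟩ := hlim g hg
    refine ⟨fun z hz => ?_, hbij hgh hgbij⟩
    lift z to Ω using hz
    simpa only [← hsr.eq, ← hgh.eq, ContinuousMap.comp_apply] using
      congrArg Subtype.val (DFunLike.congr_fun hgs z).symm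

section HolomorphicMaps

variable {E G : Type*} [NormedAddCommGroup E] [NormedSpace ℂ E] [NormedAddCommGroup G]
  [NormedSpace ℂ G]

theorem equicontinuousOn_of_differentiableOn_of_isBounded {ι : Type*} {U : Set E} (hU : IsOpen U)
    {B : Set G} (hB : Bornology.IsBounded B) {f : ι → E → G}
    (hf : ∀ i, DifferentiableOn ℂ (f i) U) (hfB : ∀ i, MapsTo (f i) U B) :
    EquicontinuousOn f U := by
  intro x hx
  refine EquicontinuousAt.equicontinuousWithinAt ?_ U
  obtain ⟨δ, hδ, hball⟩ := Metric.isOpen_iff.1 hU x hx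
  refine Metric.equicontinuousAt_of_continuity_modulus
    (fun y => Metric.diam B / δ * dist y x) ?_ f ?_
  · have : Continuous fun y => Metric.diam B / δ * dist y x := by fun_prop
    simpa only [dist_self, mul_zero] using this.tendsto x
  · filter_upwards [ball_mem_nhds x hδ] with y hy i
    rw [dist_comm]
    refine Complex.dist_le_div_mul_dist_of_mapsTo_ball ((hf i).mono hball) (fun z hz => ?_) hy
    exact Metric.dist_le_diam_of_mem hB (hfB i (hball hz)) (hfB i hx)

theorem equicontinuous_iterate_restrict {Ω : Set E} (hΩ : IsOpen Ω) (hbd : Bornology.IsBounded Ω)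
    {F : E → E} (hF : DifferentiableOn ℂ F Ω) (hFself : MapsTo F Ω Ω) :
    Equicontinuous fun k => (hFself.restrict F Ω Ω)^[k] := by
  have hval : (Subtype.val ∘ ·) ∘ (fun k => (hFself.restrict F Ω Ω)^[k]) =
      Ω.domRestrict ∘ fun k => F^[k] := by
    funext k
    simp only [comp_apply, hFself.iterate_restrict k]
    rfl
  rw [isUniformInducing_val Ω |>.equicontinuous_iff, hval, equicontinuous_restrict_iff]
  exact equicontinuousOn_of_differentiableOn_of_isBounded hΩ hbd
    (fun k => hF.iterate hFself k) fun k => hFself.iterate k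

variable {ι : Type*} {l : Filter ι} {U V : Set E} {f : ι → E → G} {g : E → G}

theorem uniformCauchySeqOn_fderiv_of_tendstoUniformlyOn {δ : ℝ} (hδ : 0 < δ)
    (hVU : ∀ y ∈ V, ball y δ ⊆ U) (hf : ∀ i, DifferentiableOn ℂ (f i) U)
    (hfg : TendstoUniformlyOn f g l U) : UniformCauchySeqOn (fun i => fderiv ℂ (f i)) l V := by
  intro u hu
  obtain ⟨ε, hε, hεu⟩ := Metric.mem_uniformity_dist.1 hu
  filter_upwards [hfg.uniformCauchySeqOn _ (Metric.dist_mem_uniformity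
    (show 0 < ε * δ / 3 by positivity))] with ⟨i, j⟩ hij y hy
  have hd (i : ι) : DifferentiableOn ℂ (f i) (ball y δ) := (hf i).mono (hVU y hy)
  have hdy (i : ι) : DifferentiableAt ℂ (f i) y := (hd i).differentiableAt (ball_mem_nhds y hδ)
  have hmaps : MapsTo (f i - f j) (ball y δ) (closedBall ((f i - f j) y) (2 * (ε * δ / 3))) :=
    fun z hz => by
      have hz' := hij z (hVU y hy hz)
      have hy' := hij y (hVU y hy (mem_ball_self hδ))
      rw [dist_eq_norm] at hz' hy'
      rw [mem_closedBall, dist_eq_norm, Pi.sub_apply, Pi.sub_apply]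
      linarith [norm_sub_le (f i z - f j z) (f i y - f j y)]
  refine hεu ?_
  calc dist (fderiv ℂ (f i) y) (fderiv ℂ (f j) y)
      = ‖fderiv ℂ (f i - f j) y‖ := by rw [dist_eq_norm, fderiv_sub (hdy i) (hdy j)]
    _ ≤ 2 * (ε * δ / 3) / δ :=
      Complex.norm_fderiv_le_div_of_mapsTo_ball ((hd i).sub (hd j)) hmaps hδ
    _ = 2 / 3 * ε := by field_simp
    _ < ε := by linarith

theorem differentiableOn_of_tendstoUniformlyOn [CompleteSpace G] [l.NeBot] (hU : IsOpen U)
    (hf : ∀ i, DifferentiableOn ℂ (f i) U) (hfg : TendstoUniformlyOn f g l U) :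
    DifferentiableOn ℂ g U := by
  intro x hx
  obtain ⟨δ, hδ, hball⟩ := Metric.isOpen_iff.1 hU x hx
  have hsub (y : E) (hy : y ∈ ball x (δ / 2)) : ball y (δ / 2) ⊆ U := by
    refine (ball_subset_ball' ?_).trans hball
    rw [mem_ball] at hy
    linarith
  have hsubU : ball x (δ / 2) ⊆ U := hsub x (mem_ball_self (half_pos hδ))
  have hcauchy := uniformCauchySeqOn_fderiv_of_tendstoUniformlyOn (half_pos hδ) hsub hf hfg
  choose! D hD using fun y (hy : y ∈ ball x (δ / 2)) =>
    cauchy_map_iff_exists_tendsto.1 (hcauchy.cauchy_map hy)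
  refine (hasFDerivAt_of_tendstoUniformlyOn isOpen_ball
    (hcauchy.tendstoUniformlyOn_of_tendsto hD) (fun i y hy => ?_)
    (fun y hy => hfg.tendsto_at (hsubU hy))
    (mem_ball_self (half_pos hδ))).differentiableAt.differentiableWithinAt
  exact ((hf i).differentiableAt (hU.mem_nhds (hsubU hy))).hasFDerivAt

theorem IsIterateLimit.differentiableOn [ProperSpace E] {Ω : Set E} (hΩ : IsOpen Ω) {F h : E → E}
    (hF : DifferentiableOn ℂ F Ω) (hFself : MapsTo F Ω Ω) (hh : IsIterateLimit F Ω h) :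
    DifferentiableOn ℂ h Ω := by
  obtain ⟨ms, -, hlim⟩ := hh
  intro x hx
  obtain ⟨δ, hδ, hball⟩ := nhds_basis_closedBall.mem_iff.1 (hΩ.mem_nhds hx)
  have hsub := ball_subset_closedBall.trans hball
  exact ((differentiableOn_of_tendstoUniformlyOn isOpen_ball
    (fun j => (hF.iterate hFself (ms j)).mono hsub)
    ((hlim _ hball (isCompact_closedBall x δ)).mono ball_subset_closedBall)).differentiableAt
    (ball_mem_nhds x hδ)).differentiableWithinAt

end HolomorphicMaps

theorem taut_iteration_theory_general {E : Type*} [NormedAddCommGroup E] [NormedSpace ℂ E]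
    [FiniteDimensional ℂ E] {Ω : Set E} (hΩ : IsOpen Ω) (hbd : Bornology.IsBounded Ω)
    {F : E → E} (hF : DifferentiableOn ℂ F Ω) (hFself : MapsTo F Ω Ω)
    (hncd : ∃ h₀, IsIterateLimit F Ω h₀ ∧ MapsTo h₀ Ω Ω) :
    ∃ r, DifferentiableOn ℂ r Ω ∧ MapsTo r Ω Ω ∧ (∀ z ∈ Ω, r (r z) = r z) ∧
      IsIterateLimit F Ω r ∧ BijOn F (r '' Ω) (r '' Ω) ∧
      ∀ h, IsIterateLimit F Ω h → (∀ z ∈ Ω, h z = h (r z)) ∧ BijOn h (r '' Ω) (r '' Ω) := by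
  have := FiniteDimensional.proper ℂ E
  have := hΩ.locallyCompactSpace
  obtain ⟨h₀, hh₀, hmaps⟩ := hncd
  let f : C(Ω, Ω) := ⟨hFself.restrict F Ω Ω, hF.continuousOn.mapsToRestrict hFself⟩
  obtain ⟨r, hr, hrΩ, hrr, hFr, hlim⟩ := exists_retraction_isIterateLimit (f := f) (fun _ => rfl)
    (equicontinuous_iterate_restrict hΩ hbd hF hFself) hh₀ hmaps
  exact ⟨r, hr.differentiableOn hΩ hF hFself, hrΩ, hrr, hr, hFr, hlim⟩

theorem taut_iteration_theory
    {n : ℕ} (Ω : Set (En n)) (ρ : En n → ℝ)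
    (hΩ : IsDomain' Ω) (hbd : Bornology.IsBounded Ω)
    (hρ : IsPcxCinfBoundary Ω ρ)
    (F : En n → En n) (hF : DifferentiableOn ℂ F Ω) (hFself : MapsTo F Ω Ω)
    (hncd : ∃ (ms : ℕ → ℕ) (h₀ : En n → En n), StrictMono ms ∧
      (∀ K ⊆ Ω, IsCompact K → TendstoUniformlyOn (fun j => F^[ms j]) h₀ atTop K) ∧
      h₀ '' Ω ⊆ Ω) :
    ∃ r : En n → En n, DifferentiableOn ℂ r Ω ∧ MapsTo r Ω Ω ∧
      (∀ z ∈ Ω, r (r z) = r z) ∧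
      (∃ ms : ℕ → ℕ, StrictMono ms ∧ ∀ K ⊆ Ω, IsCompact K →
        TendstoUniformlyOn (fun j => F^[ms j]) r atTop K) ∧
      BijOn F (r '' Ω) (r '' Ω) ∧
      ∀ h : En n → En n,
        (∃ ms : ℕ → ℕ, StrictMono ms ∧ ∀ K ⊆ Ω, IsCompact K →
          TendstoUniformlyOn (fun j => F^[ms j]) h atTop K) →
        (∀ z ∈ Ω, h z = h (r z)) ∧ BijOn h (r '' Ω) (r '' Ω) := by
  obtain ⟨ms, h₀, hms, hlim, hmaps⟩ := hncd
  exact taut_iteration_theory_general hΩ.1 hbd hF hFself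
    ⟨h₀, ⟨ms, hms, hlim⟩, mapsTo_iff_image_subset.2 hmaps⟩
end
end
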